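/- Let k be a perfect field, I ⊆ k[x_0,...,x_n] a homogeneous unmixed radical ideal of projective dimension d ≥ 1, and f a homogeneous polynomial that is a non zero divisor modulo I. Then for all m ≥ 5·d·deg I, h_{(I,f)}(m) ≤ 3 · deg f · deg I · C(m+d−1, d−1). -/

import Mathlib

open MvPolynomial

/-- Integer-valued binomial coefficient `C(a, b)`, zero when `a < 0` or `a < b`. -/
def ichoose (a : ℤ) (b : ℕ) : ℤ := if a < 0 then 0 else (a.toNat).choose b

/-- The Hilbert function of a (homogeneous) ideal `I ⊆ k[x₀, …, xₙ]`:
`m ↦ dim_k (k[x₀, …, xₙ]/I)_m`. -/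
noncomputable def hilbF (k : Type*) [Field k] {n : ℕ}
    (I : Ideal (MvPolynomial (Fin (n+1)) k)) (m : ℕ) : ℕ :=
  Module.finrank k ((homogeneousSubmodule (Fin (n+1)) k m).map
    (Ideal.Quotient.mkₐ k I).toLinearMap)

open scoped Classical in
/-- The Hilbert polynomial of `I` (the polynomial agreeing with the Hilbert
function for all large `m`; junk value `0` if none exists). -/
noncomputable def hilbP (k : Type*) [Field k] {n : ℕ}
    (I : Ideal (MvPolynomial (Fin (n+1)) k)) : Polynomial ℚ :=
  if h : ∃ P : Polynomial ℚ, ∀ᶠ m : ℕ in Filter.atTop,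
      (hilbF k I m : ℚ) = P.eval (m : ℚ) then h.choose else 0

/-- The (algebraic) degree of a homogeneous ideal `I` of projective dimension
`d ≥ 0`: `d! · (leading coefficient of its Hilbert polynomial)`. -/
noncomputable def idealDeg (k : Type*) [Field k] {n : ℕ}
    (I : Ideal (MvPolynomial (Fin (n+1)) k)) : ℕ :=
  ⌊((hilbP k I).natDegree.factorial : ℚ) * (hilbP k I).leadingCoeff⌋₊

/-- The projective dimension of a homogeneous ideal `I` (of dimension `≥ 0`):
the degree of its Hilbert polynomial. -/
noncomputable def idealDim (k : Type*) [Field k] {n : ℕ}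
    (I : Ideal (MvPolynomial (Fin (n+1)) k)) : ℕ :=
  (hilbP k I).natDegree

/-- A homogeneous ideal: one containing all homogeneous components of its elements. -/
def IsHomogeneousIdeal {k : Type*} [Field k] {n : ℕ}
    (I : Ideal (MvPolynomial (Fin (n+1)) k)) : Prop :=
  ∀ f ∈ I, ∀ m : ℕ, homogeneousComponent m f ∈ I

/-- `I` is unmixed of projective dimension `d`: every associated prime `P` of
`k[x₀,…,xₙ]/I` satisfies `dim k[x₀,…,xₙ]/P = d + 1` (affine Krull dimension). -/
def IsUnmixed (k : Type*) [Field k] {n : ℕ}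
    (I : Ideal (MvPolynomial (Fin (n+1)) k)) (d : ℕ) : Prop :=
  ∀ P ∈ associatedPrimes (MvPolynomial (Fin (n+1)) k)
      (MvPolynomial (Fin (n+1)) k ⧸ I),
    ringKrullDim (MvPolynomial (Fin (n+1)) k ⧸ P) = ((d + 1 : ℕ) : WithBot (WithTop ℕ))

/-- Dimension of the degree-`s` part modulo a subspace `V`. -/
noncomputable def cdm {k : Type*} [Field k] {σ : Type*} (s : ℕ)
    (V : Submodule k (MvPolynomial σ k)) : ℕ :=
  Module.finrank k ((homogeneousSubmodule σ k s).map V.mkQ)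

section cdmBasics
variable {k : Type*} [Field k] {σ : Type*} [Finite σ]

lemma hs_finite (s : ℕ) : Module.Finite k (homogeneousSubmodule σ k s) :=
  Module.Finite.iff_fg.mpr (homogeneousSubmodule_fg σ k s)

lemma hs_map_finite (s : ℕ) {W : Type*} [AddCommGroup W] [Module k W]
    (g : MvPolynomial σ k →ₗ[k] W) : Module.Finite k ((homogeneousSubmodule σ k s).map g) :=
  Module.Finite.iff_fg.mpr ((homogeneousSubmodule_fg σ k s).map g)

lemma finrank_map_ker {E W : Type*} [AddCommGroup E] [Module k E] [AddCommGroup W] [Module k W]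
    (g : E →ₗ[k] W) (U : Submodule k E) [Module.Finite k U] :
    Module.finrank k U = Module.finrank k (U.map g) +
      Module.finrank k (U ⊓ LinearMap.ker g : Submodule k E) := by
  have h := LinearMap.finrank_range_add_finrank_ker (g.domRestrict U)
  rw [← h, LinearMap.range_domRestrict]
  congr 1
  have : LinearMap.ker (g.domRestrict U) = (LinearMap.ker g).comap U.subtype := by
    ext x; simp
  rw [this]
  rw [LinearEquiv.finrank_eq
    (Submodule.equivMapOfInjective U.subtype U.injective_subtype ((LinearMap.ker g).comap U.subtype))]
  rw [Submodule.map_comap_subtype]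

lemma cdm_eq_of_ker {W : Type*} [AddCommGroup W] [Module k W] (s : ℕ)
    (g : MvPolynomial σ k →ₗ[k] W) (V : Submodule k (MvPolynomial σ k))
    (h : LinearMap.ker g = V) :
    Module.finrank k ((homogeneousSubmodule σ k s).map g) = cdm s V := by
  have := hs_finite (k := k) (σ := σ) s
  have h1 := finrank_map_ker g (homogeneousSubmodule σ k s)
  have h2 := finrank_map_ker V.mkQ (homogeneousSubmodule σ k s)
  rw [Submodule.ker_mkQ] at h2
  rw [h] at h1
  unfold cdm
  omega

lemma cdm_inf (s : ℕ) (V : Submodule k (MvPolynomial σ k)) :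
    Module.finrank k (homogeneousSubmodule σ k s) = cdm s V +
      Module.finrank k (homogeneousSubmodule σ k s ⊓ V : Submodule k (MvPolynomial σ k)) := by
  have := hs_finite (k := k) (σ := σ) s
  have h2 := finrank_map_ker V.mkQ (homogeneousSubmodule σ k s)
  rwa [Submodule.ker_mkQ] at h2

lemma cdm_mono (s : ℕ) {V W : Submodule k (MvPolynomial σ k)}
    (h : homogeneousSubmodule σ k s ⊓ V ≤ W) : cdm s W ≤ cdm s V := by
  have := hs_finite (k := k) (σ := σ) s
  have h1 := cdm_inf s V
  have h2 := cdm_inf s W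
  have : Module.Finite k (homogeneousSubmodule σ k s ⊓ W : Submodule k (MvPolynomial σ k)) :=
    Submodule.finiteDimensional_of_le inf_le_left
  have h3 := Submodule.finrank_mono (R := k) (le_inf inf_le_left h)
  omega

lemma cdm_add {e : ℕ} {l : MvPolynomial σ k} (hl : l.IsHomogeneous e) (s : ℕ)
    (V : Submodule k (MvPolynomial σ k)) :
    cdm (s + e) V = cdm s (V.comap (LinearMap.mulLeft k l)) +
      cdm (s + e) (V ⊔ (homogeneousSubmodule σ k s).map (LinearMap.mulLeft k l)) := by
  set W := (homogeneousSubmodule σ k s).map (LinearMap.mulLeft k l) with hW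
  have hWle : W ≤ homogeneousSubmodule σ k (s + e) := by
    rintro _ ⟨g, hg, rfl⟩
    have := hl.mul hg
    rw [add_comm] at this
    exact this
  have := hs_map_finite (k := k) (σ := σ) (s + e) V.mkQ
  have h1 := finrank_map_ker (Submodule.factor (le_sup_left : V ≤ V ⊔ W))
    ((homogeneousSubmodule σ k (s + e)).map V.mkQ)
  have h2 : LinearMap.ker (Submodule.factor (le_sup_left : V ≤ V ⊔ W)) = W.map V.mkQ := by
    unfold Submodule.factor
    rw [Submodule.mapQ, Submodule.ker_liftQ]
    simp [Submodule.map_sup]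
  have h3 : (homogeneousSubmodule σ k (s + e)).map V.mkQ ⊓ W.map V.mkQ = W.map V.mkQ :=
    inf_eq_right.mpr (Submodule.map_mono hWle)
  rw [h2, h3, ← Submodule.map_comp, Submodule.factor_comp_mk] at h1
  have h4 : Module.finrank k (W.map V.mkQ) = cdm s (V.comap (LinearMap.mulLeft k l)) := by
    rw [hW, ← Submodule.map_comp]
    apply cdm_eq_of_ker
    rw [LinearMap.ker_comp, Submodule.ker_mkQ]
  rw [h4] at h1
  unfold cdm at h1 ⊢
  omega

lemma hilbF_eq_cdm {n : ℕ} (I : Ideal (MvPolynomial (Fin (n+1)) k)) (m : ℕ) :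
    hilbF k I m = cdm m (I.restrictScalars k) := by
  unfold hilbF
  apply cdm_eq_of_ker
  ext x
  simp [Ideal.Quotient.eq_zero_iff_mem]

lemma hilbF_mono {n : ℕ} {I J : Ideal (MvPolynomial (Fin (n+1)) k)} (h : I ≤ J) (m : ℕ) :
    hilbF k J m ≤ hilbF k I m := by
  rw [hilbF_eq_cdm, hilbF_eq_cdm]
  exact cdm_mono m (inf_le_right.trans h)

lemma hilbF_add {n e : ℕ} {I : Ideal (MvPolynomial (Fin (n+1)) k)} (hI : IsHomogeneousIdeal I)
    {f : MvPolynomial (Fin (n+1)) k} (hf : f.IsHomogeneous e) (J : Ideal (MvPolynomial (Fin (n+1)) k))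
    (hJ : ∀ g, g ∈ J ↔ f * g ∈ I) (m : ℕ) :
    hilbF k I (m + e) = hilbF k J m + hilbF k (I ⊔ Ideal.span {f}) (m + e) := by
  rw [hilbF_eq_cdm, cdm_add hf m, hilbF_eq_cdm, hilbF_eq_cdm]
  congr 1
  · congr 1
    ext g; simp [hJ]
  · apply le_antisymm
    · apply cdm_mono
      rintro x ⟨hx, hx2⟩
      obtain ⟨a, ha, b, hb, rfl⟩ := Submodule.mem_sup.mp (show x ∈ I ⊔ Ideal.span {f} from hx2)
      obtain ⟨c, rfl⟩ := Ideal.mem_span_singleton'.mp hb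
      have h1 : homogeneousComponent (m + e) (a + c * f) = a + c * f :=
        homogeneousComponent_eq_self hx
      rw [← h1, map_add]
      refine Submodule.add_mem_sup (hI a ha _) ?_
      refine ⟨homogeneousComponent m c, homogeneousComponent_mem _ _, ?_⟩
      have h2 : c * f = ∑ i ∈ Finset.range (c.totalDegree + 1), homogeneousComponent i c * f := by
        conv_lhs => rw [← sum_homogeneousComponent c]
        rw [Finset.sum_mul]
      rw [h2, map_sum]
      have h3 : ∀ i, homogeneousComponent (m + e) (homogeneousComponent i c * f) =
          if i = m then homogeneousComponent i c * f else 0 := by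
        intro i
        rw [homogeneousComponent_of_mem (((homogeneousComponent_isHomogeneous i c).mul hf) :
          _ ∈ homogeneousSubmodule _ _ _)]
        by_cases him : i = m
        · simp [him]
        · rw [if_neg him, if_neg]; omega
      simp only [h3, Finset.sum_ite_eq', Finset.mem_range]
      split_ifs with h4
      · simp [mul_comm]
      · rw [homogeneousComponent_eq_zero]
        · simp
        · omega
    · apply cdm_mono
      refine inf_le_right.trans (sup_le ?_ ?_)
      · intro x hx; exact Ideal.mem_sup_left hx
      · rintro _ ⟨g, -, rfl⟩
        exact Ideal.mem_sup_right (Ideal.mul_mem_right _ _ (Ideal.mem_span_singleton_self f))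
end cdmBasics

/-- Real-valued binomial coefficient `C(x+s, s)`. -/
noncomputable def lov (s : ℕ) (x : ℝ) : ℝ := ∏ i ∈ Finset.range s, (x + i + 1) / (i + 1)

lemma lov_zero (x : ℝ) : lov 0 x = 1 := by simp [lov]

lemma lov_succ (s : ℕ) (x : ℝ) : lov (s+1) x = lov s x * ((x + s + 1) / (s + 1)) := by
  unfold lov
  rw [Finset.prod_range_succ]

lemma lov_shift (s : ℕ) (x : ℝ) : lov (s+1) (x-1) = lov s x * (x / (s + 1)) := by
  induction s with
  | zero => simp [lov]
  | succ s ih =>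
    rw [lov_succ, ih, lov_succ s x]
    push_cast
    field_simp
    ring

lemma lov_pascal (s : ℕ) (x : ℝ) : lov (s+1) x = lov (s+1) (x-1) + lov s x := by
  rw [lov_shift, lov_succ]
  have : (s:ℝ) + 1 ≠ 0 := by positivity
  field_simp
  ring

lemma lov_nonneg (s : ℕ) {x : ℝ} (hx : -1 ≤ x) : 0 ≤ lov s x := by
  apply Finset.prod_nonneg
  intro i _
  have : (0:ℝ) ≤ i := by positivity
  apply div_nonneg <;> linarith

lemma lov_mono (s : ℕ) {x y : ℝ} (hx : -1 ≤ x) (h : x ≤ y) : lov s x ≤ lov s y := by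
  apply Finset.prod_le_prod
  · intro i _
    have : (0:ℝ) ≤ i := by positivity
    apply div_nonneg <;> linarith
  · intro i _
    have : (0:ℝ) ≤ i := by positivity
    gcongr

lemma lov_strict (s : ℕ) {x y : ℝ} (hx : 0 ≤ x) (h : x < y) : lov (s+1) x < lov (s+1) y := by
  apply Finset.prod_lt_prod_of_nonempty
  · intro i _
    positivity
  · intro i _
    gcongr
  · simp

lemma lov_nat (s d : ℕ) : lov s d = ((s + d).choose d : ℝ) := by
  induction s with
  | zero => simp [lov]
  | succ s ih =>
    rw [lov_succ, ih]
    have h := Nat.add_one_mul_choose_eq (s + d) s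
    have e1 : (s + d).choose s = (s + d).choose d := Nat.choose_symm_add
    have e2 : (s + d).succ.choose s.succ = (s + 1 + d).choose d := by
      rw [show (s+d).succ = (s+1) + d by omega]; exact Nat.choose_symm_add
    rw [e1, e2] at h
    have h' : ((s:ℝ) + d + 1) * ((s + d).choose d : ℝ) = ((s + 1 + d).choose d : ℝ) * (s + 1) := by
      exact_mod_cast h
    field_simp
    linarith

lemma lov_exists (s : ℕ) {N : ℝ} (hN : 1 ≤ N) : ∃ x, 0 ≤ x ∧ lov (s+1) x = N := by
  have hc : Continuous (lov (s+1)) := by unfold lov; fun_prop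
  have h0 : lov (s+1) 0 = 1 := by
    have := lov_nat (s+1) 0
    simpa using this
  have h1 : N ≤ lov (s+1) N := by
    have : ∀ s, N ≤ lov (s+1) N := by
      intro s
      induction s with
      | zero => simp [lov]
      | succ s ih =>
        rw [lov_succ]
        have h2 : 1 ≤ (N + (s+1:ℕ) + 1) / ((s+1:ℕ) + 1) := by
          rw [le_div_iff₀ (by positivity)]; linarith
        nlinarith [ih]
    exact this s
  obtain ⟨x, hx, hx2⟩ := intermediate_value_Icc (by linarith : (0:ℝ) ≤ N) hc.continuousOn
    (show N ∈ Set.Icc (lov (s+1) 0) (lov (s+1) N) from ⟨by linarith, h1⟩)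
  exact ⟨x, hx.1, hx2⟩

section green
variable {k : Type*} [Field k] {σ : Type*} [Fintype σ]

/-- A condition on vectors which on every line through a good point fails finitely often. -/
def LineOpen (Q : (σ → k) → Prop) : Prop :=
  ∀ a b, Q a → {t : k | ¬ Q (a + t • b)}.Finite

lemma LineOpen.and {Q R : (σ → k) → Prop} (hQ : LineOpen Q) (hR : LineOpen R) :
    LineOpen (fun a => Q a ∧ R a) := by
  intro a b h
  refine ((hQ a b h.1).union (hR a b h.2)).subset ?_
  intro t ht
  simp only [Set.mem_ofPred_eq, Set.mem_union] at *
  tauto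

lemma LineOpen.inter [Infinite k] {Q R : (σ → k) → Prop} (hQ : LineOpen Q) (hR : LineOpen R)
    (h1 : ∃ a, Q a) (h2 : ∃ a, R a) : ∃ a, Q a ∧ R a := by
  obtain ⟨a, ha⟩ := h1
  obtain ⟨b, hb⟩ := h2
  have f1 := hQ a (b - a) ha
  have f2 := hR b (a - b) hb
  have f3 : ((fun t : k => 1 - t) '' {t : k | ¬ R (b + t • (a - b))}).Finite := f2.image _
  obtain ⟨t, ht⟩ := (f1.union f3).exists_notMem
  simp only [Set.mem_union, Set.mem_ofPred_eq, Set.mem_image, not_or, not_not, not_exists,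
    not_and] at ht
  refine ⟨a + t • (b - a), ht.1, ?_⟩
  by_contra hc
  refine ht.2 (1 - t) ?_ (by ring)
  convert hc using 2
  ext i
  simp
  ring

/-- The linear form with coefficient vector `a`. -/
noncomputable def linF : (σ → k) →ₗ[k] MvPolynomial σ k :=
  ∑ i, (LinearMap.toSpanSingleton k (MvPolynomial σ k) (X i)).comp (LinearMap.proj i)

lemma linF_apply (a : σ → k) : linF a = ∑ i, a i • X i := by simp [linF]

lemma linF_hom (a : σ → k) : (linF a).IsHomogeneous 1 := by
  rw [linF_apply]
  apply IsHomogeneous.sum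
  intro i _
  rw [smul_eq_C_mul]
  exact isHomogeneous_C_mul_X _ _

/-- Hyperplane section of `V` in degree `s+1`. -/
noncomputable def secV (s : ℕ) (V : Submodule k (MvPolynomial σ k)) (a : σ → k) :
    Submodule k (MvPolynomial σ k) :=
  V ⊔ (homogeneousSubmodule σ k s).map (LinearMap.mulLeft k (linF a))

lemma cdm_sec (s : ℕ) (V : Submodule k (MvPolynomial σ k)) (a : σ → k) :
    cdm (s+1) V = cdm s (V.comap (LinearMap.mulLeft k (linF a))) + cdm (s+1) (secV s V a) :=
  cdm_add (linF_hom a) s V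

/-- `a` gives a section of minimal codimension. -/
def GenS (s : ℕ) (V : Submodule k (MvPolynomial σ k)) (a : σ → k) : Prop :=
  ∀ b, cdm (s+1) (secV s V a) ≤ cdm (s+1) (secV s V b)

lemma genS_nonempty (s : ℕ) (V : Submodule k (MvPolynomial σ k)) : ∃ a, GenS s V a :=
  ⟨_, fun b => Function.argmin_le (fun a => cdm (s+1) (secV s V a)) b⟩

lemma rank_open {E W : Type*} [AddCommGroup E] [Module k E] [AddCommGroup W] [Module k W]
    (U : Submodule k E) (hU : Module.Finite k U) (f h : E →ₗ[k] W) :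
    {t : k | Module.finrank k (U.map (f + t • h)) < Module.finrank k (U.map f)}.Finite := by
  classical
  have hfinU : ∀ f : E →ₗ[k] W, Module.Finite k (U.map f) := fun f => by
    have h1 := (Module.Finite.iff_fg (N := U)).mp hU
    exact Module.Finite.iff_fg.mpr (h1.map f)
  have hfin := hfinU f
  obtain ⟨r, hr, g, hg, hli⟩ : ∃ r, r = Module.finrank k (U.map f) ∧ ∃ g : Fin r → E,
      (∀ i, g i ∈ U) ∧ LinearIndependent k (fun i => f (g i)) := by
    have B := Module.finBasis k (U.map f)
    have hex : ∀ i, ∃ g ∈ U, f g = (B i : W) := fun i => (B i).2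
    choose g hg hgB using hex
    refine ⟨_, rfl, g, hg, ?_⟩
    have := B.linearIndependent.map' _ (Submodule.ker_subtype _)
    have e : (fun i => f (g i)) = (U.map f).subtype ∘ B := by
      ext i; exact hgB i
    rw [e]; exact this
  rw [← hr]
  obtain ⟨ψ, hψ⟩ : ∃ ψ : Fin r → W →ₗ[k] k,
      ∀ i j, ψ j (f (g i)) = if i = j then 1 else 0 := by
    let B2 := Module.Basis.extend hli.linearIndepOn_id
    let e : Fin r → (hli.linearIndepOn_id).extend (Set.subset_univ _) := fun i =>
      ⟨f (g i), (hli.linearIndepOn_id).subset_extend _ ⟨i, rfl⟩⟩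
    refine ⟨fun j => B2.coord (e j), fun i j => ?_⟩
    have : f (g i) = B2 (e i) := by simp [B2, e]
    rw [this, Module.Basis.coord_apply, Module.Basis.repr_self, Finsupp.single_apply]
    congr 1
    simp only [eq_iff_iff, e, Subtype.mk.injEq]
    exact ⟨fun h => hli.injective h, fun h => by rw [h]⟩
  let N : Matrix (Fin r) (Fin r) k := fun i j => ψ j (h (g i))
  let p : Polynomial k := (1 + (Polynomial.X : Polynomial k) • N.map Polynomial.C).det
  have hp : ∀ t, p.eval t = (1 + t • N).det := by
    intro t
    have := RingHom.map_det (Polynomial.evalRingHom t)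
      (1 + (Polynomial.X : Polynomial k) • N.map Polynomial.C)
    rw [Polynomial.coe_evalRingHom] at this
    rw [show p.eval t = _ from this]
    congr 1
    ext i j
    simp [Matrix.one_apply]
    split_ifs <;> simp [mul_comm]
  have hp0 : p ≠ 0 := by
    intro h
    have := hp 0
    rw [h] at this
    simp at this
  refine (p.rootSet_finite k).subset ?_
  intro t ht
  rw [Polynomial.mem_rootSet]
  refine ⟨hp0, ?_⟩
  by_contra hdet
  have hdet' : (1 + t • N).det ≠ 0 := by
    rw [← hp]; simpa using hdet
  have hli2 : LinearIndependent k (fun i => (f + t • h) (g i)) := by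
    rw [Fintype.linearIndependent_iff]
    intro c hc
    have : Matrix.vecMul c (1 + t • N) = 0 := by
      ext j
      have h5 := congrArg (ψ j) hc
      simp only [map_sum, map_smul, LinearMap.add_apply, LinearMap.smul_apply, map_add, hψ,
        map_zero] at h5
      simp only [Matrix.vecMul, dotProduct, Matrix.add_apply, Matrix.smul_apply, Matrix.one_apply,
        Pi.zero_apply]
      exact h5
    have h6 := Matrix.eq_zero_of_vecMul_eq_zero hdet' this
    intro i
    rw [h6]; rfl
  have hfin2 := hfinU (f + t • h)
  have h7 : LinearIndependent k (fun i => (⟨(f + t • h) (g i), ⟨g i, hg i, rfl⟩⟩ :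
      U.map (f + t • h))) := by
    apply LinearIndependent.of_comp (Submodule.subtype _)
    exact hli2
  have h8 := h7.fintype_card_le_finrank
  have h9 : Module.finrank k (U.map (f + t • h)) < r := ht
  rw [Fintype.card_fin] at h8
  omega

lemma genS_open (s : ℕ) (V : Submodule k (MvPolynomial σ k)) : LineOpen (GenS s V) := by
  intro a b ha
  have hΦ : ∀ c, Module.finrank k ((homogeneousSubmodule σ k s).map
      (V.mkQ ∘ₗ LinearMap.mulLeft k (linF c))) =
      cdm s (V.comap (LinearMap.mulLeft k (linF c))) := by
    intro c
    apply cdm_eq_of_ker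
    rw [LinearMap.ker_comp, Submodule.ker_mkQ]
  refine (rank_open (homogeneousSubmodule σ k s) (hs_finite s)
    (V.mkQ ∘ₗ LinearMap.mulLeft k (linF a)) (V.mkQ ∘ₗ LinearMap.mulLeft k (linF b))).subset ?_
  intro t ht
  by_contra hc
  apply ht
  have hlin : V.mkQ ∘ₗ LinearMap.mulLeft k (linF a) + t • (V.mkQ ∘ₗ LinearMap.mulLeft k (linF b))
      = V.mkQ ∘ₗ LinearMap.mulLeft k (linF (a + t • b)) := by
    apply LinearMap.ext
    intro x
    simp only [LinearMap.add_apply, LinearMap.smul_apply, LinearMap.comp_apply,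
      LinearMap.mulLeft_apply, map_add, map_smul, add_mul, smul_mul_assoc]
  have hc' : ¬ (Module.finrank k ((homogeneousSubmodule σ k s).map
    (V.mkQ ∘ₗ LinearMap.mulLeft k (linF a) + t • (V.mkQ ∘ₗ LinearMap.mulLeft k (linF b)))) <
    Module.finrank k ((homogeneousSubmodule σ k s).map (V.mkQ ∘ₗ LinearMap.mulLeft k (linF a)))) := hc
  rw [hlin, hΦ, hΦ] at hc'
  intro c
  have e1 := ha c
  have e2 := cdm_sec s V a
  have e3 := cdm_sec s V (a + t • b)
  omega

lemma sec_lt (s : ℕ) (V : Submodule k (MvPolynomial σ k)) (h : cdm (s+1) V ≠ 0) :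
    ∃ a, cdm (s+1) (secV s V a) < cdm (s+1) V := by
  classical
  by_contra hc
  push Not at hc
  apply h
  have key : ∀ i : σ, ∀ g ∈ homogeneousSubmodule σ k s, X i * g ∈ V := by
    intro i g hg
    have e1 := cdm_sec s V (Pi.single i 1)
    have e2 := hc (Pi.single i 1)
    have e3 : cdm s (V.comap (LinearMap.mulLeft k (linF (Pi.single i 1)))) = 0 := by omega
    have e4 : linF (Pi.single i (1:k)) = X i := by
      rw [linF_apply, Finset.sum_eq_single i]
      · simp
      · intro j _ hj; simp [hj]
      · simp
    rw [e4] at e3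
    have hfin := hs_map_finite (k := k) (σ := σ) s (V.comap (LinearMap.mulLeft k (X i))).mkQ
    have e5 := Submodule.finrank_eq_zero.mp e3
    have e6 : (V.comap (LinearMap.mulLeft k (X i))).mkQ g ∈
      (homogeneousSubmodule σ k s).map (V.comap (LinearMap.mulLeft k (X i))).mkQ := ⟨g, hg, rfl⟩
    rw [e5, Submodule.mem_bot, Submodule.mkQ_apply, Submodule.Quotient.mk_eq_zero] at e6
    exact e6
  have h2 : homogeneousSubmodule σ k (s+1) ≤ V := by
    rw [← homogeneousSubmodule_one_pow, pow_succ', homogeneousSubmodule_one_pow,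
      homogeneousSubmodule_one_eq_span_X, Submodule.mul_le]
    intro x hx g hg
    induction hx using Submodule.span_induction with
    | mem x hx => obtain ⟨i, rfl⟩ := hx; exact key i g hg
    | zero => simp
    | add x y _ _ h1 h2 => rw [add_mul]; exact V.add_mem h1 h2
    | smul c x _ h1 => rw [smul_mul_assoc]; exact V.smul_mem c h1
  unfold cdm
  have : (homogeneousSubmodule σ k (s+1)).map V.mkQ = ⊥ := by
    rw [eq_bot_iff]
    rintro _ ⟨x, hx, rfl⟩
    simpa using h2 hx
  rw [this]
  simp

lemma sec_colon (s : ℕ) (V : Submodule k (MvPolynomial σ k)) (a b : σ → k) :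
    secV s (V.comap (LinearMap.mulLeft k (linF b))) a ≤
      (secV (s+1) V a).comap (LinearMap.mulLeft k (linF b)) := by
  unfold secV
  apply sup_le
  · exact Submodule.comap_mono le_sup_left
  · rintro _ ⟨g, hg, rfl⟩
    apply Submodule.mem_sup_right
    refine ⟨linF b * g, ?_, ?_⟩
    · have := (linF_hom b).mul hg
      rw [add_comm] at this
      exact this
    · simp [mul_left_comm]

/-- Green's hyperplane restriction theorem in Lovász form. -/
theorem green [Infinite k] (s : ℕ) : ∀ (c : ℕ) (V : Submodule k (MvPolynomial σ k)),
    cdm (s+1) V = c → ∀ y : ℝ, 1 ≤ y →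
    (∀ a, lov (s+1) (y-1) ≤ cdm (s+1) (secV s V a)) → lov (s+1) y ≤ cdm (s+1) V := by
  induction s with
  | zero =>
    intro c V _ y hy h
    obtain ⟨a, ha⟩ : ∃ a, cdm (0+1) (secV 0 V a) < cdm (0+1) V := by
      apply sec_lt
      intro h0
      have h1 := h 0
      have h2 := cdm_sec 0 V 0
      have h3 : cdm (0+1) (secV 0 V 0) = 0 := by omega
      rw [h3] at h1
      simp [lov] at h1
      linarith
    have h1 := h a
    simp only [lov, zero_add, Finset.range_one, Finset.prod_singleton] at h1 ⊢
    have h2 : ((cdm 1 (secV 0 V a) : ℕ) : ℝ) + 1 ≤ cdm 1 V := by exact_mod_cast ha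
    simp at h1 ⊢
    linarith
  | succ s ihs =>
    intro c
    induction c using Nat.strong_induction_on with
    | _ c ihc =>
    intro V hV y hy h
    -- choose `a0, b0`
    obtain ⟨p0, hp0⟩ : ∃ p : (σ → k) × (σ → k), ∀ q : (σ → k) × (σ → k),
        cdm (s+1+1) (secV (s+1) (secV (s+1) V p.1) p.2) ≤
        cdm (s+1+1) (secV (s+1) (secV (s+1) V q.1) q.2) :=
      ⟨_, fun q => Function.argmin_le
        (fun q : (σ → k) × (σ → k) => cdm (s+1+1) (secV (s+1) (secV (s+1) V q.1) q.2)) q⟩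
    have hcomm : ∀ a b, secV (s+1) (secV (s+1) V a) b = secV (s+1) (secV (s+1) V b) a := by
      intro a b
      unfold secV
      rw [sup_assoc, sup_assoc, sup_comm (Submodule.map _ _)]
    obtain ⟨b, hb1, hb2⟩ := LineOpen.inter (genS_open (s+1) V) (genS_open (s+1) (secV (s+1) V p0.1))
      (genS_nonempty _ _) (genS_nonempty _ _)
    obtain ⟨a, ⟨ha1, ha2⟩, ha3⟩ := LineOpen.inter
      ((genS_open (s+1) V).and (genS_open (s+1) (secV (s+1) V b)))
      (genS_open s (V.comap (LinearMap.mulLeft k (linF b))))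
      (LineOpen.inter (genS_open (s+1) V) (genS_open (s+1) (secV (s+1) V b))
        (genS_nonempty _ _) (genS_nonempty _ _)) (genS_nonempty _ _)
    -- `b` is generic for the section by `a`
    have hb3 : ∀ b', cdm (s+1+1) (secV (s+1) (secV (s+1) V a) b) ≤
        cdm (s+1+1) (secV (s+1) (secV (s+1) V a) b') := by
      intro b'
      have e1 := hp0 (a, b')
      have e2 := hb2 p0.2
      have e3 := ha2 p0.1
      rw [hcomm b a, hcomm b p0.1] at e3
      exact e3.trans (e2.trans e1)
    set c1 := cdm (s+1+1) (secV (s+1) V a) with hc1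
    set c2 := cdm (s+1+1) (secV (s+1) (secV (s+1) V a) b) with hc2
    have hc1b : cdm (s+1+1) (secV (s+1) V b) = c1 := le_antisymm (hb1 a) (ha1 b)
    have hy1 := h a
    rw [← hc1] at hy1
    have hone : (1:ℝ) ≤ c1 := by
      have : 0 < c1 := by
        have h0 : 0 < lov (s+1+1) (y-1) := by
          have e := lov_mono (s+1+1) (by norm_num : (-1:ℝ) ≤ 0) (by linarith : (0:ℝ) ≤ y - 1)
          have e0 := lov_nat (s+1+1) 0
          simp at e0
          rw [e0] at e
          linarith
        exact_mod_cast h0.trans_le hy1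
      exact_mod_cast this
    obtain ⟨Y', hY0, hY⟩ := lov_exists (s+1) hone
    obtain ⟨Y, rfl⟩ : ∃ Y, Y' = Y - 1 := ⟨Y' + 1, by ring⟩
    have hyY : y ≤ Y := by
      by_contra hlt
      push Not at hlt
      have := lov_strict (s+1) hY0 (by linarith : Y - 1 < y - 1)
      rw [hY] at this
      linarith
    have hlt : c1 < c := by
      obtain ⟨a', ha'⟩ := sec_lt (s+1) V (by
        have := cdm_sec (s+1) V a
        have h0 : 0 < c1 := by exact_mod_cast (by linarith : (0:ℝ) < c1)
        omega)
      have := ha1 a'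
      omega
    have hc2le : (c2 : ℝ) ≤ lov (s+1+1) (Y - 2) := by
      rcases Nat.eq_zero_or_pos c2 with h0 | h0
      · rw [h0]
        simpa using lov_nonneg (s+1+1) (by linarith : -1 ≤ Y - 2)
      · have h1 : (1:ℝ) ≤ c2 := by exact_mod_cast h0
        obtain ⟨z, hz0, hz⟩ := lov_exists (s+1) h1
        have e := ihc c1 hlt (secV (s+1) V a) hc1.symm (z+1) (by linarith) (by
          intro b'
          rw [add_sub_cancel_right, hz]
          exact_mod_cast hb3 b')
        rw [← hc1, ← hY] at e
        have hzY : z + 1 ≤ Y - 1 := by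
          by_contra hlt
          push Not at hlt
          have := lov_strict (s+1) hY0 hlt
          linarith
        rw [← hz]
        exact lov_mono _ (by linarith) (by linarith)
    have e1 := cdm_sec (s+1) (secV (s+1) V a) b
    rw [← hc1, ← hc2] at e1
    have e2 := cdm_mono (s+1) (inf_le_right.trans (sec_colon s V a b))
    have e3 := lov_pascal (s+1) (Y-1)
    have e4 : lov (s+1) (Y-1) ≤
        cdm (s+1) (secV s (V.comap (LinearMap.mulLeft k (linF b))) a) := by
      have e5 : (c1 : ℝ) = cdm (s+1) ((secV (s+1) V a).comap (LinearMap.mulLeft k (linF b))) + c2 := by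
        exact_mod_cast e1
      have e6 : ((cdm (s+1) ((secV (s+1) V a).comap (LinearMap.mulLeft k (linF b))) : ℕ) : ℝ) ≤
        cdm (s+1) (secV s (V.comap (LinearMap.mulLeft k (linF b))) a) := by exact_mod_cast e2
      rw [show Y - 1 - 1 = Y - 2 by ring] at e3
      linarith
    have e7 := ihs _ (V.comap (LinearMap.mulLeft k (linF b))) rfl Y (by linarith) (by
      intro a'
      refine e4.trans ?_
      exact_mod_cast ha3 a')
    have e8 := cdm_sec (s+1) V b
    rw [hc1b] at e8
    have e9 : (cdm (s+1+1) V : ℝ) =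
      cdm (s+1) (V.comap (LinearMap.mulLeft k (linF b))) + c1 := by exact_mod_cast e8
    have e10 := lov_pascal (s+1) Y
    have e11 := lov_mono (s+1+1) (by linarith : (-1:ℝ) ≤ y) hyY
    linarith
end green

lemma lov_step (s : ℕ) (x : ℝ) : lov s (x+1) * (x+1) = lov s x * (x + 1 + s) := by
  have h1 := lov_shift s (x+1)
  rw [add_sub_cancel_right, lov_succ] at h1
  have : (s:ℝ) + 1 ≠ 0 := by positivity
  field_simp at h1
  linarith

lemma lov_perturb (d : ℕ) {x δ : ℝ} (hx : 0 ≤ x) (hδ : 0 ≤ δ) :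
    lov d (x + δ) ≤ lov d x * Real.exp (d * (δ / (x+1))) := by
  have h1 : lov d (x+δ) ≤ lov d x * (1 + δ/(x+1))^d := by
    induction d with
    | zero => simp [lov]
    | succ d ih =>
      rw [lov_succ, lov_succ, pow_succ]
      have h2 : (x + δ + d + 1)/(d+1) ≤ ((x + d + 1)/(d+1)) * (1 + δ/(x+1)) := by
        rw [div_mul_eq_mul_div]
        gcongr
        have : (x + d + 1) * (1 + δ/(x+1)) = (x + d + 1) + δ + d * (δ/(x+1)) := by
          field_simp
          ring
        rw [this]
        have : 0 ≤ d * (δ/(x+1)) := by positivity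
        linarith
      have h3 : 0 ≤ lov d x := lov_nonneg d (by linarith)
      calc lov d (x+δ) * ((x + δ + d + 1)/(d+1))
          ≤ (lov d x * (1 + δ/(x+1))^d) * (((x + d + 1)/(d+1)) * (1 + δ/(x+1))) := by
            apply mul_le_mul ih h2 (by positivity) (by positivity)
        _ = _ := by ring
  refine h1.trans ?_
  apply mul_le_mul_of_nonneg_left _ (lov_nonneg d (by linarith))
  rw [Real.exp_nat_mul]
  apply pow_le_pow_left₀ (by positivity)
  have := Real.add_one_le_exp (δ/(x+1))
  linarith

lemma exp_fifth : Real.exp (1/5) ≤ 1.23 := by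
  have h := Real.add_one_le_exp (-(1/20:ℝ))
  have h2 : Real.exp (1/20) * Real.exp (-(1/20)) = 1 := by rw [← Real.exp_add]; simp
  have h3 : Real.exp (1/20) ≤ 20/19 := by
    have : 0 < Real.exp (1/20) := Real.exp_pos _
    nlinarith
  have h4 : Real.exp (1/5) = Real.exp (1/20) ^ 4 := by
    rw [← Real.exp_nat_mul]; norm_num
  rw [h4]
  calc Real.exp (1/20) ^ 4 ≤ (20/19)^4 := by gcongr
    _ ≤ 1.23 := by norm_num

lemma exp_third : Real.exp (0.34) ≤ 1.46 := by
  have h := Real.add_one_le_exp (-(0.17:ℝ))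
  have h2 : Real.exp (0.17) * Real.exp (-(0.17)) = 1 := by rw [← Real.exp_add]; simp
  have h3 : Real.exp (0.17) ≤ 100/83 := by
    have : 0 < Real.exp (0.17) := Real.exp_pos _
    nlinarith
  have h4 : Real.exp (0.34) = Real.exp (0.17) ^ 2 := by
    rw [← Real.exp_nat_mul]; norm_num
  rw [h4]
  calc Real.exp (0.17) ^ 2 ≤ (100/83)^2 := by gcongr
    _ ≤ 1.46 := by norm_num

set_option maxHeartbeats 1600000 in
lemma numerics (h : ℕ → ℕ) (D d e m H : ℕ) (hd : 1 ≤ d) (hm : 5 * d * D ≤ m)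
    (hU : ∀ s, h s ≤ D * (s + D - 1 + d).choose d)
    (hG : ∀ t : ℕ, ∀ y : ℝ, 1 ≤ y → lov (t+1) (y-1) ≤ (h (t+1) : ℝ) - h t →
      lov (t+1) y ≤ h (t+1))
    (hH1 : H ≤ h m) (hH2 : e ≤ m → h m = h (m-e) + H) :
    H ≤ 3 * e * D * (m + d - 1).choose (d-1) := by
  rcases Nat.eq_zero_or_pos D with rfl | hD
  · have := hU m
    simp at this
    omega
  obtain ⟨D', rfl⟩ : ∃ D', D = D' + 1 := ⟨D - 1, by omega⟩
  obtain ⟨d', rfl⟩ : ∃ d', d = d' + 1 := ⟨d - 1, by omega⟩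
  -- upper bound
  have up : ∀ s : ℕ, (h s : ℝ) ≤ (D'+1) * (lov s (d'+1) * Real.exp ((d'+1) * (D' / (s+1)))) := by
    intro s
    have h1 : (h s : ℝ) ≤ (D'+1) * ((s + D' + (d'+1)).choose (d'+1) : ℝ) := by
      have := hU s
      rw [show s + (D'+1) - 1 + (d'+1) = s + D' + (d'+1) by omega] at this
      exact_mod_cast this
    refine h1.trans ?_
    gcongr
    have h2 := lov_perturb (d'+1) (x := s) (δ := D') (by positivity) (by positivity)
    have h3 : lov (d'+1) ((s:ℝ) + D') = ((s + D' + (d'+1)).choose (d'+1) : ℝ) := by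
      have := lov_nat (d'+1) (s+D')
      push_cast at this
      rw [this]
      rw [← Nat.choose_symm_add, add_comm (d'+1)]
    have h4 : lov (d'+1) (s:ℝ) = lov s (d'+1) := by
      have e1 := lov_nat (d'+1) s
      have e2 := lov_nat s (d'+1)
      push_cast at e1 e2
      rw [e1, e2, add_comm s, Nat.choose_symm_add]
    rw [h3, h4] at h2
    exact_mod_cast h2
  have hmR : (5:ℝ) * (d'+1) * (D'+1) ≤ m := by exact_mod_cast hm
  have hchoose : ∀ s : ℕ, ((s + (d'+1) - 1).choose (d'+1-1) : ℝ) = lov s d' := by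
    intro s
    rw [lov_nat]; rfl
  have hpos : ∀ (s : ℕ) (x : ℝ), 0 ≤ x → 0 < lov s x := by
    intro s x hx
    apply Finset.prod_pos
    intro i _
    positivity
  have hb0 : (0:ℝ) ≤ d' := by positivity
  have hD0 : (0:ℝ) ≤ D' := by positivity
  have hmono : ∀ s : ℕ, s ≤ m → lov s d' ≤ lov m d' := by
    intro s hs
    rw [lov_nat, lov_nat]
    exact_mod_cast Nat.choose_le_choose _ (by omega)
  have goalR : (H:ℝ) ≤ 3 * e * (D'+1) * lov m d' → H ≤ 3 * e * (D'+1) * (m + (d'+1) - 1).choose (d'+1-1) := by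
    intro hh
    rw [← hchoose] at hh
    exact_mod_cast hh
  apply goalR
  by_cases hA : (1.23:ℝ) * (m + (d'+1)) ≤ 3 * e * (d'+1)
  · have h1 := up m
    have h2 : Real.exp ((d'+1) * (D' / (m+1))) ≤ 1.23 := by
      refine le_trans ?_ exp_fifth
      apply Real.exp_le_exp.mpr
      rw [← mul_div_assoc, div_le_div_iff₀ (by positivity) (by norm_num)]
      nlinarith
    have h3 := lov_step m d'
    have h4 := hpos m d' hb0
    have h5 := hpos m (d'+1) (by positivity)
    have h6 : (H:ℝ) ≤ h m := by exact_mod_cast hH1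
    have h7 : lov m (d'+1) * Real.exp ((d'+1) * (D' / (m+1))) ≤ 3 * e * lov m d' := by
      have : lov m (d'+1) * 1.23 ≤ 3 * e * lov m d' := by
        have hp : (0:ℝ) < d' + 1 := by positivity
        rw [← mul_le_mul_iff_left₀ hp]
        nlinarith
      refine le_trans ?_ this
      gcongr
    calc (H:ℝ) ≤ (D'+1) * (lov m (d'+1) * Real.exp ((d'+1) * (D' / (m+1)))) := h6.trans h1
      _ ≤ (D'+1) * (3 * e * lov m d') := by gcongr
      _ = _ := by ring
  · push Not at hA
    have hem : e ≤ m := by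
      have h1 : (e:ℝ) * (d'+1) ≤ 0.41 * (m + (d'+1)) := by linarith
      have : (e:ℝ) ≤ m := by
        by_contra hc
        push Not at hc
        nlinarith
      exact_mod_cast this
    -- bound on differences
    have key : ∀ t : ℕ, (2.95:ℝ) * (d'+1) * (D'+1) ≤ (t+1:ℕ) →
        (h (t+1) : ℝ) - h t ≤ 3 * (D'+1) * lov (t+1) d' := by
      intro t ht
      by_contra hc
      push Not at hc
      set N : ℝ := (h (t+1) : ℝ) - h t with hN
      set s : ℕ := t + 1 with hs
      have hl := hpos s d' hb0
      have hl1 := hpos s (d'+1) (by positivity)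
      have h1 : (1:ℝ) ≤ lov s d' := by
        rw [lov_nat]
        exact_mod_cast Nat.choose_pos (by omega)
      have hN1 : 1 ≤ N := by nlinarith
      obtain ⟨x, hx0, hx⟩ := lov_exists t hN1
      rw [← hs] at hx
      have g1 := hG t (x+1) (by linarith) (by rw [add_sub_cancel_right, ← hs, hx])
      rw [← hs] at g1
      have st := lov_step s x
      have st2 := lov_step s d'
      have hxd : (d':ℝ) < x := by
        by_contra hh
        push Not at hh
        have := lov_mono s (by linarith) hh
        nlinarith
      have u1 := up s
      have u2 : Real.exp ((d'+1) * (D' / (s+1))) ≤ 1.46 := by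
        refine le_trans ?_ exp_third
        apply Real.exp_le_exp.mpr
        rw [← mul_div_assoc, div_le_iff₀ (by positivity)]
        nlinarith
      have u3 : (h s : ℝ) ≤ (D'+1) * (lov s (d'+1) * 1.46) := by
        refine u1.trans ?_
        gcongr
      have hDl : 0 < (D'+1) * lov s (d'+1) := by positivity
      by_cases hx1 : x ≤ d' + 1
      · have v1 : lov s x * ((s + d' + 2)/(d'+2)) ≤ lov s (x+1) := by
          have : lov s (x+1) = lov s x * ((x+1+s)/(x+1)) := by
            field_simp; linarith
          rw [this]
          apply mul_le_mul_of_nonneg_left _ (hpos s x hx0).le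
          rw [div_le_div_iff₀ (by positivity) (by positivity)]
          have : (0:ℝ) ≤ s := by positivity
          nlinarith
        have v2 : 3 * (D'+1) * lov s d' * ((s + d' + 2)/(d'+2)) ≤ lov s x * ((s + d' + 2)/(d'+2)) := by
          rw [hx]
          gcongr
        have v3 : 1.5 * ((D'+1) * lov s (d'+1)) ≤ 3 * (D'+1) * lov s d' * ((s + d' + 2)/(d'+2)) := by
          have w1 : lov s (d'+1) ≤ 2 * lov s d' * ((s + d' + 2)/(d'+2)) := by
            rw [mul_div_assoc', le_div_iff₀ (by positivity)]
            have hp : (0:ℝ) < d' + 1 := by positivity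
            rw [← mul_le_mul_iff_left₀ hp]
            have : lov s (d'+1) * (d'+2) * (d'+1) = (d'+2) * (lov s d' * (d' + 1 + s)) := by
              rw [← st2]; ring
            rw [this]
            have hs0 : (0:ℝ) ≤ s := by positivity
            have : (d'+2) * (d' + 1 + (s:ℝ)) ≤ 2 * (s + d' + 2) * (d'+1) := by nlinarith
            have h8 := mul_le_mul_of_nonneg_left this hl.le
            linarith
          have := mul_le_mul_of_nonneg_left w1 (by positivity : (0:ℝ) ≤ 1.5 * (D'+1))
          linarith
        linarith
      · push Not at hx1
        have w0 : lov s (d'+1+1) ≤ lov s (x+1) := lov_mono s (by linarith) (by linarith)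
        have w1 := lov_step s (d'+1)
        have w2 : 1.475 * (D'+1) * lov s (d'+1) ≤ lov s (d'+1+1) := by
          have hp : (0:ℝ) < d' + 1 + 1 := by positivity
          rw [← mul_le_mul_iff_left₀ hp, w1]
          have : 1.475 * (D'+1) * (d'+1+1) ≤ (d':ℝ) + 1 + 1 + s := by
            have : (1.475:ℝ) * (D'+1) * (d'+1+1) ≤ 2.95 * (d'+1) * (D'+1) := by nlinarith
            linarith
          have h8 := mul_le_mul_of_nonneg_left this hl1.le
          linarith
        linarith
    -- telescoping
    have tele : ∀ j : ℕ, j ≤ e → (h m : ℝ) - h (m - j) ≤ 3 * j * (D'+1) * lov m d' := by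
      intro j
      induction j with
      | zero => intro _; simp
      | succ j ih =>
        intro hj
        have h1 := ih (by omega)
        obtain ⟨t, ht⟩ : ∃ t, m - j = t + 1 := ⟨m - j - 1, by omega⟩
        have ht2 : m - (j+1) = t := by omega
        have h2 := key t (by
          have e1 : ((t+1:ℕ):ℝ) = m - j := by
            rw [← ht, Nat.cast_sub (by omega)]
          rw [e1]
          have e2 : ((j:ℝ)+1) ≤ e := by exact_mod_cast hj
          have e3 : 3 * ((j:ℝ)+1) * (d'+1) ≤ 1.23 * (m + (d'+1)) := by nlinarith
          have e4 : (j:ℝ) ≤ 0.41 * m := by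
            have hm0 : (0:ℝ) ≤ m := by positivity
            have hj0 : (0:ℝ) ≤ j := by positivity
            nlinarith
          nlinarith)
        have h3 := hmono (t+1) (by omega)
        rw [ht2]
        rw [ht] at h1
        have h4 : 3 * ((D':ℝ)+1) * lov (t+1) d' ≤ 3 * (D'+1) * lov m d' := by gcongr
        push_cast
        nlinarith
    have h1 := tele e le_rfl
    have h2 : (h m : ℝ) = h (m-e) + H := by exact_mod_cast hH2 hem
    linarith

section graded
variable {k : Type*} [Field k] {σ : Type*} (P : Ideal (MvPolynomial σ k))

/-- Homogeneous ideals in any set of variables. -/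
def HomI (P : Ideal (MvPolynomial σ k)) : Prop :=
  ∀ f ∈ P, ∀ m : ℕ, homogeneousComponent m f ∈ P

/-- The graded pieces of the quotient ring. -/
noncomputable def gr (m : ℕ) : Submodule k (MvPolynomial σ k ⧸ P) :=
  (homogeneousSubmodule σ k m).map (Ideal.Quotient.mkₐ k P).toLinearMap

lemma gr_finite [Fintype σ] (m : ℕ) : Module.Finite k (gr P m) := hs_map_finite m _

lemma mk_mem_gr {m : ℕ} {f : MvPolynomial σ k} (hf : f.IsHomogeneous m) :
    Ideal.Quotient.mk P f ∈ gr P m := ⟨f, hf, rfl⟩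

lemma mem_gr {m : ℕ} {x : MvPolynomial σ k ⧸ P} :
    x ∈ gr P m ↔ ∃ f : MvPolynomial σ k, f.IsHomogeneous m ∧ Ideal.Quotient.mk P f = x := Iff.rfl

lemma gr_mul {m m' : ℕ} {x y : MvPolynomial σ k ⧸ P} (hx : x ∈ gr P m) (hy : y ∈ gr P m') :
    x * y ∈ gr P (m + m') := by
  obtain ⟨f, hf, rfl⟩ := hx
  obtain ⟨g, hg, rfl⟩ := hy
  exact ⟨f * g, hf.mul hg, map_mul (Ideal.Quotient.mk P) _ _⟩

lemma gr_one : (1 : MvPolynomial σ k ⧸ P) ∈ gr P 0 := ⟨1, isHomogeneous_one _ _, map_one (Ideal.Quotient.mk P)⟩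

lemma gr_pow {m : ℕ} {x : MvPolynomial σ k ⧸ P} (hx : x ∈ gr P m) (i : ℕ) :
    x ^ i ∈ gr P (m * i) := by
  induction i with
  | zero => simpa using gr_one P
  | succ i ih => rw [pow_succ, mul_add, mul_one]; exact gr_mul P ih hx

lemma hcomp_mul {j m : ℕ} {f g : MvPolynomial σ k} (hf : f.IsHomogeneous j) :
    homogeneousComponent (j + m) (f * g) = f * homogeneousComponent m g := by
  classical
  conv_lhs => rw [← sum_homogeneousComponent g, Finset.mul_sum, map_sum]
  have : ∀ i, homogeneousComponent (j+m) (f * homogeneousComponent i g) =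
      if i = m then f * homogeneousComponent m g else 0 := by
    intro i
    rw [homogeneousComponent_of_mem (hf.mul (homogeneousComponent_isHomogeneous i g))]
    by_cases h : i = m
    · simp [h]
    · rw [if_neg (by omega), if_neg h]
  simp_rw [this]
  rw [Finset.sum_ite_eq']
  split_ifs with h
  · rfl
  · rw [homogeneousComponent_eq_zero]
    · simp
    · simpa using h

lemma hcomp_mul_lt {j m : ℕ} {f g : MvPolynomial σ k} (hf : f.IsHomogeneous j) (hm : m < j) :
    homogeneousComponent m (f * g) = 0 := by
  classical
  conv_lhs => rw [← sum_homogeneousComponent g, Finset.mul_sum, map_sum]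
  apply Finset.sum_eq_zero
  intro i _
  rw [homogeneousComponent_of_mem (hf.mul (homogeneousComponent_isHomogeneous i g)),
    if_neg (by omega)]

variable {P}

/-- Projection of the quotient ring to its degree `m` part. -/
noncomputable def grC (hP : HomI P) (m : ℕ) :
    (MvPolynomial σ k ⧸ P) →ₗ[k] (MvPolynomial σ k ⧸ P) :=
  Submodule.mapQ (P.restrictScalars k) (P.restrictScalars k) (homogeneousComponent m)
    (fun f hf => hP f hf m)

lemma grC_mk (hP : HomI P) (m : ℕ) (f : MvPolynomial σ k) :
    grC hP m (Ideal.Quotient.mk P f) = Ideal.Quotient.mk P (homogeneousComponent m f) := rfl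

lemma grC_mem (hP : HomI P) (m : ℕ) (x) : grC hP m x ∈ gr P m := by
  obtain ⟨f, rfl⟩ := Ideal.Quotient.mk_surjective x
  exact mk_mem_gr P (homogeneousComponent_isHomogeneous m f)

lemma grC_gr (hP : HomI P) {m m' : ℕ} {x} (hx : x ∈ gr P m') :
    grC hP m x = if m = m' then x else 0 := by
  classical
  obtain ⟨f, hf, rfl⟩ := hx
  refine (grC_mk hP m f).trans ?_
  rw [homogeneousComponent_of_mem hf]
  split_ifs <;> simp

lemma grC_mul (hP : HomI P) {j m : ℕ} {x y} (hx : x ∈ gr P j) :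
    grC hP (j + m) (x * y) = x * grC hP m y := by
  obtain ⟨f, hf, rfl⟩ := hx
  obtain ⟨g, rfl⟩ := Ideal.Quotient.mk_surjective y
  refine (grC_mk hP (j+m) (f * g)).trans ?_
  rw [hcomp_mul hf, map_mul]; rfl

lemma mem_of_grC (hP : HomI P) {x : MvPolynomial σ k ⧸ P} {M : Submodule k (MvPolynomial σ k ⧸ P)}
    (h : ∀ m, grC hP m x ∈ M) : x ∈ M := by
  obtain ⟨f, rfl⟩ := Ideal.Quotient.mk_surjective x
  rw [← sum_homogeneousComponent f, map_sum]
  exact M.sum_mem fun i _ => h i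

lemma eq_zero_of_grC (hP : HomI P) {x : MvPolynomial σ k ⧸ P}
    (h : ∀ m, grC hP m x = 0) : x = 0 := by
  have := mem_of_grC hP (M := ⊥) (x := x) (fun m => by simp [h m])
  simpa using this

lemma aeval_gr {ι : Type*} {y : ι → MvPolynomial σ k ⧸ P} (hy : ∀ i, y i ∈ gr P 1) {m : ℕ}
    {f : MvPolynomial ι k} (hf : f.IsHomogeneous m) : aeval y f ∈ gr P m := by
  choose Y hY hYy using hy
  refine ⟨aeval Y f, ?_, ?_⟩
  · have := hf.aeval Y (n := 1) hY
    rw [one_mul] at this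
    exact this
  · have h : (Ideal.Quotient.mkₐ k P) (aeval Y f) = aeval (fun i => Ideal.Quotient.mkₐ k P (Y i)) f := by
      rw [← AlgHom.comp_apply, comp_aeval]
    refine h.trans ?_
    congr 2
    ext i; exact hYy i

lemma grC_aeval (hP : HomI P) {ι : Type*} {y : ι → MvPolynomial σ k ⧸ P} (hy : ∀ i, y i ∈ gr P 1)
    (m : ℕ) (f : MvPolynomial ι k) :
    grC hP m (aeval y f) = aeval y (homogeneousComponent m f) := by
  classical
  conv_lhs => rw [← sum_homogeneousComponent f, map_sum, map_sum]
  have : ∀ i, grC hP m (aeval y (homogeneousComponent i f)) =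
      if i = m then aeval y (homogeneousComponent m f) else 0 := by
    intro i
    rw [grC_gr hP (aeval_gr hy (homogeneousComponent_isHomogeneous i f))]
    by_cases h : m = i
    · simp [h]
    · rw [if_neg h, if_neg (Ne.symm h)]
  simp_rw [this]
  rw [Finset.sum_ite_eq']
  split_ifs with h
  · rfl
  · rw [homogeneousComponent_eq_zero]
    · simp
    · simpa using h

lemma gr_succ (m : ℕ) {M : Submodule k (MvPolynomial σ k ⧸ P)}
    (h : ∀ x ∈ gr P 1, ∀ y ∈ gr P m, x * y ∈ M) : gr P (m+1) ≤ M := by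
  rintro _ ⟨f, hf, rfl⟩
  have h2 : homogeneousSubmodule σ k (m+1) ≤ M.comap (Ideal.Quotient.mkₐ k P).toLinearMap := by
    rw [← homogeneousSubmodule_one_pow, pow_succ', homogeneousSubmodule_one_pow, Submodule.mul_le]
    intro x hx g hg
    have := h _ (mk_mem_gr P hx) _ (mk_mem_gr P hg)
    simpa using this
  exact h2 hf
end graded

section norm
variable {k : Type*} [Field k]

lemma deriv_aeval {ι : Type*} [Fintype ι] {R M : Type*} [CommRing R] [Algebra k R] [AddCommGroup M]
    [Module k M] [Module R M] (D : Derivation k R M) (y : ι → R) (G : MvPolynomial ι k) :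
    D (aeval y G) = ∑ j, aeval y (pderiv j G) • D (y j) := by
  classical
  induction G using MvPolynomial.induction_on with
  | C a => simp [aeval_C]
  | add p q hp hq => simp [hp, hq, add_smul, Finset.sum_add_distrib]
  | mul_X p i hp =>
    simp only [map_mul, aeval_X, Derivation.leibniz, hp, pderiv_X, smul_eq_mul, map_add, add_smul]
    rw [Finset.sum_add_distrib, Finset.smul_sum]
    congr 1
    · rw [Finset.sum_eq_single i]
      · simp
      · intro j _ hj
        simp [Pi.single_apply, Ne.symm hj]
      · simp
    · apply Finset.sum_congr rfl
      intro j _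
      rw [mul_smul]

lemma aeval_line {ι : Type*} [Fintype ι] {B : Type*} [CommRing B] [Algebra k B] (u : ι → k) (w : B)
    {G : MvPolynomial ι k} {δ : ℕ} (hG : G.IsHomogeneous δ) :
    aeval (fun i => algebraMap k B (u i) * w) G = algebraMap k B (eval u G) * w ^ δ := by
  rw [aeval_def, eval₂_eq', eval_eq', map_sum, Finset.sum_mul]
  apply Finset.sum_congr rfl
  intro d hd
  have hdeg : ∑ i, d i = δ := by
    have := hG (mem_support_iff.mp hd)
    rw [Finsupp.weight_apply, Finsupp.sum_fintype _ _ (by simp)] at this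
    simpa using this
  simp_rw [mul_pow]
  rw [Finset.prod_mul_distrib, Finset.prod_pow_eq_pow_sum, hdeg, map_mul, map_prod]
  simp_rw [map_pow]
  ring

/-- Over a perfect field a polynomial with vanishing derivatives is constant or a `p`-th power. -/
lemma pderiv_zero_cases [PerfectField k] {ι : Type*} {G : MvPolynomial ι k} {δ : ℕ}
    (hG : G.IsHomogeneous δ) (hδ : 0 < δ) (hG0 : G ≠ 0) (h : ∀ j, pderiv j G = 0) :
    ∃ (p : ℕ) (H : MvPolynomial ι k) (δ' : ℕ), H.IsHomogeneous δ' ∧ δ' < δ ∧ G = H ^ p := by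
  classical
  obtain ⟨p, hp⟩ := ExpChar.exists k
  have hdvd : ∀ d ∈ G.support, ∀ j, (d j : k) = 0 := by
    intro d hd j
    by_cases hj : d j = 0
    · simp [hj]
    have := coeff_pderiv (i := j) G (d - Finsupp.single j 1)
    rw [h j, coeff_zero] at this
    have e : d - Finsupp.single j 1 + Finsupp.single j 1 = d := by
      apply tsub_add_cancel_of_le
      rw [Finsupp.single_le_iff]; omega
    rw [e] at this
    have h2 := (mul_eq_zero.mp this.symm).resolve_left (mem_support_iff.mp hd)
    have e2 : (d - Finsupp.single j 1 : ι →₀ ℕ) j + 1 = d j := by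
      have := DFunLike.congr_fun e j
      rw [Finsupp.add_apply, Finsupp.single_eq_same] at this
      exact this
    rw [← e2]; exact_mod_cast h2
  rcases hp with ⟨⟩ | hpp
  ·
    exfalso
    obtain ⟨d, hd⟩ := ne_zero_iff.mp hG0
    have h1 := hG hd
    have h2 : d = 0 := by
      ext j
      exact_mod_cast hdvd d (mem_support_iff.mpr hd) j
    rw [h2] at h1
    simp at h1
    omega
  · have hp := hpp
    have hfact : Fact p.Prime := ⟨hp⟩
    have hexp : ExpChar k p := ExpChar.prime hp
    have hperf : PerfectRing k p := inferInstance
    have hq : ∀ d ∈ G.support, ∀ j, p ∣ d j := fun d hd j =>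
      (CharP.cast_eq_zero_iff k p _).mp (hdvd d hd j)
    -- the root
    let dv : (ι →₀ ℕ) → (ι →₀ ℕ) := fun d => d.mapRange (· / p) (by simp)
    have hdv : ∀ d ∈ G.support, p • dv d = d := by
      intro d hd
      ext j
      simpa [dv] using Nat.mul_div_cancel' (hq d hd j)
    let H : MvPolynomial ι k := ∑ d ∈ G.support, monomial (dv d) ((frobeniusEquiv k p).symm (coeff d G))
    have hHG : G = H ^ p := by
      rw [sum_pow_char]
      conv_lhs => rw [G.as_sum]
      apply Finset.sum_congr rfl
      intro d hd
      rw [monomial_pow, hdv d hd]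
      congr 1
      exact (frobeniusEquiv_symm_pow_p k p _).symm
    refine ⟨p, H, δ / p, ?_, Nat.div_lt_self hδ hp.one_lt, hHG⟩
    apply IsHomogeneous.sum
    intro d hd
    apply isHomogeneous_monomial
    have h1 := hG (mem_support_iff.mp hd)
    rw [← hdv d hd] at h1
    have h2 : Finsupp.weight (1 : ι → ℕ) (p • dv d) = p * Finsupp.weight (1 : ι → ℕ) (dv d) := by
      rw [map_nsmul, smul_eq_mul]
    rw [h2] at h1
    rw [← h1, Nat.mul_div_cancel_left _ hp.pos]
    rw [Finsupp.degree_eq_weight_one (R := ℕ)]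
    rfl

lemma step_rad {R : Type*} [CommRing R] [Algebra k R] {r δ : ℕ} {y : Fin (r+1) → R}
    {u : Fin (r+1) → k} {i0 : Fin (r+1)} (hu0 : u i0 = 1) {G : MvPolynomial (Fin (r+1)) k}
    (hG : G.IsHomogeneous δ) (hGk : aeval y G = 0) (hu1 : eval u G ≠ 0) :
    Ideal.span (Set.range y) ≤ (Ideal.span (Set.range fun i : Fin r =>
      y (i0.succAbove i) - u (i0.succAbove i) • y i0)).radical := by
  set J := (Ideal.span (Set.range fun i : Fin r =>
      y (i0.succAbove i) - u (i0.succAbove i) • y i0)) with hJ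
  have hc : ∀ i, y i - u i • y i0 ∈ J := by
    intro i
    rcases Fin.eq_self_or_eq_succAbove i0 i with rfl | ⟨j, rfl⟩
    · rw [hu0]; simp
    · exact Ideal.subset_span ⟨j, rfl⟩
  have hpow : (y i0) ^ δ ∈ J := by
    have h1 : Ideal.Quotient.mkₐ k J (aeval y G) = 0 := by rw [hGk, map_zero]
    rw [← AlgHom.comp_apply, comp_aeval] at h1
    have e : (fun i => Ideal.Quotient.mkₐ k J (y i)) =
        fun i => algebraMap k _ (u i) * Ideal.Quotient.mkₐ k J (y i0) := by
      ext i
      rw [← Algebra.smul_def, ← map_smul]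
      exact Ideal.Quotient.eq.mpr (hc i)
    rw [e, aeval_line u _ hG, ← Algebra.smul_def, smul_eq_zero] at h1
    have h2 := h1.resolve_left hu1
    rw [← map_pow] at h2
    exact Ideal.Quotient.eq_zero_iff_mem.mp h2
  have hr0 : y i0 ∈ J.radical := ⟨δ, hpow⟩
  rw [Ideal.span_le]
  rintro _ ⟨i, rfl⟩
  have : y i = (y i - u i • y i0) + u i • y i0 := by ring
  rw [this]
  apply Ideal.add_mem _ (Ideal.le_radical (hc i))
  rw [Algebra.smul_def]
  exact Ideal.mul_mem_left _ _ hr0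

lemma step_der {R K : Type*} [CommRing R] [Algebra k R] [Field K] [Algebra k K] [Algebra R K]
    [IsScalarTower k R K]
    [FaithfulSMul R K] {r : ℕ} {y : Fin (r+1) → R}
    {u : Fin (r+1) → k} {i0 : Fin (r+1)} (hu0 : u i0 = 1) {G : MvPolynomial (Fin (r+1)) k}
    (hGk : aeval y G = 0) (hu2 : ∑ j, u j • aeval y (pderiv j G) ≠ 0)
    (D : Derivation k R K) (hD : ∀ i : Fin r, D (y (i0.succAbove i) - u (i0.succAbove i) • y i0) = 0)
    (i) : D (y i) = 0 := by
  have h1 : ∀ i, D (y i) = u i • D (y i0) := by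
    intro i
    rcases Fin.eq_self_or_eq_succAbove i0 i with rfl | ⟨j, rfl⟩
    · rw [hu0, one_smul]
    · have := hD j
      simp only [map_sub, D.map_smul] at this
      exact sub_eq_zero.mp this
  have h2 := deriv_aeval D y G
  rw [hGk, map_zero] at h2
  have h3 : (∑ j, u j • aeval y (pderiv j G)) • D (y i0) = 0 := by
    rw [h2, Finset.sum_smul]
    apply Finset.sum_congr rfl
    intro j _
    rw [h1 j, smul_assoc, smul_comm]
  have h4 : D (y i0) = 0 := by
    rw [Algebra.smul_def, mul_eq_zero] at h3
    refine h3.resolve_left fun h => hu2 ?_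
    exact (FaithfulSMul.algebraMap_injective R K) (h.trans (map_zero _).symm)
  rw [h1, h4, smul_zero]

variable {σ : Type*} [Fintype σ] {P : Ideal (MvPolynomial σ k)}

/-- The invariants of the reduction to a system of generic linear forms. -/
structure NormSys (P : Ideal (MvPolynomial σ k)) [P.IsPrime] (r : ℕ)
    (y : Fin r → MvPolynomial σ k ⧸ P) : Prop where
  lin : ∀ i, y i ∈ gr P 1
  rad : ∀ x ∈ gr P 1, x ∈ (Ideal.span (Set.range y)).radical
  der : ∀ D : Derivation k (MvPolynomial σ k ⧸ P) (FractionRing (MvPolynomial σ k ⧸ P)),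
    (∀ i, D (y i) = 0) → D = 0

lemma normSys_start [P.IsPrime] : ∃ r y, NormSys P r y := by
  let e := Fintype.equivFin σ
  refine ⟨Fintype.card σ, fun i => Ideal.Quotient.mk P (X (e.symm i)), ?_, ?_, ?_⟩
  · intro i
    exact mk_mem_gr P (isHomogeneous_X _ _)
  · intro x hx
    apply Ideal.le_radical
    have : gr P 1 ≤ (Ideal.span (Set.range fun i => Ideal.Quotient.mk P (X (e.symm i)))).restrictScalars k := by
      unfold gr
      rw [homogeneousSubmodule_one_eq_span_X, Submodule.map_span, Submodule.span_le]
      rintro _ ⟨_, ⟨i, rfl⟩, rfl⟩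
      apply Ideal.subset_span
      exact ⟨e i, by simp⟩
    exact this hx
  · intro D hD
    ext x
    obtain ⟨f, rfl⟩ := Ideal.Quotient.mk_surjective x
    have h1 : Ideal.Quotient.mk P f = aeval (fun i => Ideal.Quotient.mk P (X i)) f := by
      have : (Ideal.Quotient.mkₐ k P) = aeval (fun i => Ideal.Quotient.mk P (X i)) := by
        ext i; simp
      exact DFunLike.congr_fun this f
    rw [h1, deriv_aeval]
    apply Finset.sum_eq_zero
    intro j _
    have := hD (e j)
    simp only [Equiv.symm_apply_apply] at this
    rw [this, smul_zero]

lemma normSys_step [P.IsPrime] [Infinite k] [PerfectField k] (hP : HomI P) {r : ℕ}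
    {y : Fin (r+1) → MvPolynomial σ k ⧸ P} (hy : NormSys P (r+1) y)
    (hinj : ¬ Function.Injective (aeval y : MvPolynomial (Fin (r+1)) k →ₐ[k] _)) :
    ∃ y', NormSys P r y' := by
  classical
  -- nonzero homogeneous kernel element of minimal degree
  have hex : ∃ δ, ∃ G : MvPolynomial (Fin (r+1)) k, G.IsHomogeneous δ ∧ G ≠ 0 ∧ aeval y G = 0 := by
    rw [injective_iff_map_eq_zero] at hinj
    push Not at hinj
    obtain ⟨f, hf, hf0⟩ := hinj
    by_contra hc
    push Not at hc
    apply hf0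
    rw [← sum_homogeneousComponent f]
    apply Finset.sum_eq_zero
    intro i _
    by_contra h0
    apply hc i _ (homogeneousComponent_isHomogeneous i f) h0
    rw [← grC_aeval hP hy.lin, hf, map_zero]
  obtain ⟨G, hG, hG0, hGk⟩ := Nat.find_spec hex
  have hmin := fun δ => Nat.find_min hex (m := δ)
  set δ := Nat.find hex with hδ
  have hδ0 : 0 < δ := by
    rw [Nat.pos_iff_ne_zero]
    intro h0
    rw [h0, ← totalDegree_zero_iff_isHomogeneous, totalDegree_eq_zero_iff_eq_C] at hG
    rw [hG, aeval_C] at hGk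
    apply hG0
    rw [hG, (FaithfulSMul.algebraMap_injective k (MvPolynomial σ k ⧸ P)) (hGk.trans (map_zero _).symm), C_0]
  -- some derivative is not in the kernel
  obtain ⟨j0, hj0⟩ : ∃ j, aeval y (pderiv j G) ≠ 0 := by
    by_contra hc
    push Not at hc
    have hz : ∀ j, pderiv j G = 0 := by
      intro j
      by_contra h0
      exact hmin (δ - 1) (by omega) ⟨_, hG.pderiv, h0, hc j⟩
    obtain ⟨p, H, δ', hH, hlt, rfl⟩ := pderiv_zero_cases hG hδ0 hG0 hz
    refine hmin δ' hlt ⟨H, hH, ?_, ?_⟩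
    · rintro rfl
      by_cases hp : p = 0
      · subst hp
        simp at hGk
      · simp [hp] at hG0
    · rw [map_pow] at hGk
      exact eq_zero_of_pow_eq_zero hGk
  obtain ⟨l, hl⟩ : ∃ l : (MvPolynomial σ k ⧸ P) →ₗ[k] k, l (aeval y (pderiv j0 G)) ≠ 0 := by
    by_contra hc
    push Not at hc
    exact hj0 ((Module.forall_dual_apply_eq_zero_iff k _).mp hc)
  obtain ⟨v, hv⟩ : ∃ v, eval v (G * ∑ j, C (l (aeval y (pderiv j G))) * X j) ≠ 0 := by
    by_contra hc
    push Not at hc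
    have h1 : G * ∑ j, C (l (aeval y (pderiv j G))) * X j = 0 := by
      apply MvPolynomial.funext
      intro v
      rw [hc v, map_zero]
    have h2 := (mul_eq_zero.mp h1).resolve_left hG0
    apply hl
    have h3 := congrArg (coeff (Finsupp.single j0 1)) h2
    simp only [coeff_sum, coeff_C_mul, coeff_X, coeff_zero] at h3
    rw [Finset.sum_eq_single j0] at h3
    · simpa using h3
    · intro b _ hb
      rw [if_neg, mul_zero]
      intro h
      exact hb (Finsupp.single_left_injective one_ne_zero h)
    · simp
  rw [map_mul, map_sum] at hv
  have hv1 : eval v G ≠ 0 := left_ne_zero_of_mul hv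
  have hv2 : ∑ j, l (aeval y (pderiv j G)) * v j ≠ 0 := by
    have := right_ne_zero_of_mul hv
    simpa using this
  obtain ⟨i0, hi0⟩ : ∃ i, v i ≠ 0 := by
    by_contra hc
    push Not at hc
    simp [hc] at hv2
  -- normalise
  let u : Fin (r+1) → k := fun i => v i / v i0
  have hu : ∀ i, algebraMap k k (v i0)⁻¹ * v i = u i := fun i => by
    simp [u, div_eq_inv_mul]
  have hu0 : u i0 = 1 := div_self hi0
  have hu1 : eval u G ≠ 0 := by
    have := aeval_line (B := k) v (v i0)⁻¹ hG
    have e : (fun i => algebraMap k k (v i) * (v i0)⁻¹) = u := by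
      ext i; simp [u, div_eq_mul_inv]
    rw [e] at this
    have h3 : aeval u G = eval u G := by rw [aeval_def, eval₂_eq_eval_map]; simp
    rw [← h3, this]
    exact mul_ne_zero (by simpa using hv1) (pow_ne_zero _ (inv_ne_zero hi0))
  have hu2 : ∑ j, u j • aeval y (pderiv j G) ≠ 0 := by
    intro h
    have h2 := congrArg l h
    rw [map_sum, map_zero] at h2
    apply hv2
    have : ∑ j, l (aeval y (pderiv j G)) * v j = v i0 * ∑ j, l (u j • aeval y (pderiv j G)) := by
      rw [Finset.mul_sum]
      apply Finset.sum_congr rfl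
      intro j _
      rw [map_smul, smul_eq_mul]
      simp only [u]
      field_simp
    rw [this, h2, mul_zero]
  let y' : Fin r → MvPolynomial σ k ⧸ P := fun i => y (i0.succAbove i) - u (i0.succAbove i) • y i0
  refine ⟨y', ?_, ?_, ?_⟩
  · intro i
    exact (gr P 1).sub_mem (hy.lin _) ((gr P 1).smul_mem _ (hy.lin _))
  · intro x hx
    exact (Ideal.radical_le_radical_iff.mpr (step_rad hu0 hG hGk hu1)) (hy.rad x hx)
  · intro D hD
    exact hy.der D (step_der hu0 hGk hu2 D hD)

theorem normSys_exists [P.IsPrime] [Infinite k] [PerfectField k] (hP : HomI P) :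
    ∃ r y, NormSys P r y ∧ Function.Injective (aeval y : MvPolynomial (Fin r) k →ₐ[k] _) := by
  obtain ⟨r, y, h⟩ := normSys_start (P := P)
  induction r with
  | zero =>
    refine ⟨0, y, h, ?_⟩
    rw [injective_iff_map_eq_zero]
    intro f hf
    obtain ⟨c, rfl⟩ := C_surjective (Fin 0) f
    rw [aeval_C] at hf
    rw [(FaithfulSMul.algebraMap_injective k (MvPolynomial σ k ⧸ P)) (hf.trans (map_zero _).symm), C_0]
  | succ r ih =>
    by_cases hinj : Function.Injective (aeval y : MvPolynomial (Fin (r+1)) k →ₐ[k] _)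
    · exact ⟨_, y, h, hinj⟩
    · obtain ⟨y', h'⟩ := normSys_step hP h hinj
      exact ih y' h'
end norm

/-- An abstract (standard) graded algebra with projections onto its pieces. -/
structure Grd {k R : Type*} [Field k] [CommRing R] [Algebra k R]
    (g : ℕ → Submodule k R) (c : ℕ → R →ₗ[k] R) : Prop where
  one : (1 : R) ∈ g 0
  mul : ∀ {m m' : ℕ} {x y : R}, x ∈ g m → y ∈ g m' → x * y ∈ g (m + m')
  cmem : ∀ m x, c m x ∈ g m
  ceq : ∀ {m m' : ℕ} {x : R}, x ∈ g m' → c m x = if m = m' then x else 0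
  cmul : ∀ {j m : ℕ} {x y : R}, x ∈ g j → c (j + m) (x * y) = x * c m y
  ext : ∀ {M : Submodule k R} {x : R}, (∀ m, c m x ∈ M) → x ∈ M
  succ : ∀ (m : ℕ) {M : Submodule k R}, (∀ x ∈ g 1, ∀ y ∈ g m, x * y ∈ M) → g (m+1) ≤ M
  fin : ∀ m, Module.Finite k (g m)

namespace Grd
section
variable {k R : Type*} [Field k] [CommRing R] [Algebra k R]
  {g : ℕ → Submodule k R} {c : ℕ → R →ₗ[k] R} (G : Grd g c)
include G

lemma pow {m : ℕ} {x : R} (hx : x ∈ g m) (i : ℕ) : x ^ i ∈ g (m * i) := by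
  induction i with
  | zero => simpa using G.one
  | succ i ih => rw [pow_succ, mul_add, mul_one]; exact G.mul ih hx

lemma le_pow (m : ℕ) : g m ≤ ((Ideal.span (g 1 : Set R)) ^ m).restrictScalars k := by
  induction m with
  | zero => intro x _; simp
  | succ m ih =>
    apply G.succ
    intro x hx y hy
    change x * y ∈ Ideal.span (g 1 : Set R) ^ (m+1)
    rw [pow_succ']
    exact Ideal.mul_mem_mul (Ideal.subset_span hx) (ih hy)

lemma fg_one : (Ideal.span (g 1 : Set R)).FG := by
  have := G.fin 1
  obtain ⟨s, hs⟩ := (Module.Finite.iff_fg.mp this)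
  refine ⟨s, ?_⟩
  rw [← hs]
  exact (Submodule.span_span_of_tower k R (s : Set R)).symm

variable {r : ℕ} [Algebra (MvPolynomial (Fin r) k) R] [IsScalarTower k (MvPolynomial (Fin r) k) R]
  (hA : ∀ m a, c m (algebraMap (MvPolynomial (Fin r) k) R a) =
    algebraMap (MvPolynomial (Fin r) k) R (homogeneousComponent m a))
include hA

lemma amem {m : ℕ} {a : MvPolynomial (Fin r) k} (ha : a.IsHomogeneous m) :
    algebraMap (MvPolynomial (Fin r) k) R a ∈ g m := by
  have := G.cmem m (algebraMap (MvPolynomial (Fin r) k) R a)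
  rwa [hA, homogeneousComponent_of_mem (n := m) ha, if_pos rfl] at this

lemma finite (hrad : ∀ x ∈ g 1, x ∈ (Ideal.span (Set.range fun i : Fin r =>
      algebraMap (MvPolynomial (Fin r) k) R (X i))).radical) :
    Module.Finite (MvPolynomial (Fin r) k) R := by
  obtain ⟨N, hN⟩ := Ideal.exists_pow_le_of_le_radical_of_fg (Ideal.span_le.mpr hrad) G.fg_one
  let M : Submodule (MvPolynomial (Fin r) k) R :=
    ⨆ m ∈ Finset.range (N+1), Submodule.span (MvPolynomial (Fin r) k) (g m : Set R)
  have hM : ∀ m, g m ≤ M.restrictScalars k := by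
    intro m
    induction m using Nat.strong_induction_on with
    | _ m ih =>
    rcases Nat.lt_or_ge m (N+1) with h | h
    · intro x hx
      exact (le_iSup₂_of_le (f := fun m (_ : m ∈ Finset.range (N+1)) =>
        Submodule.span (MvPolynomial (Fin r) k) (g m : Set R)) m
        (Finset.mem_range.mpr h) le_rfl) (Submodule.subset_span hx)
    · obtain ⟨m, rfl⟩ : ∃ m', m = m' + 1 := ⟨m - 1, by omega⟩
      intro x hx
      have h1 := hN (Ideal.pow_le_pow_right (by omega) (G.le_pow _ hx))
      rw [Ideal.mem_span_range_iff_exists_fun] at h1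
      obtain ⟨a, ha⟩ := h1
      have h2 : c (m+1) x = x := by rw [G.ceq hx, if_pos rfl]
      have h3 : x = ∑ i, (X i : MvPolynomial (Fin r) k) • c m (a i) := by
        rw [← h2, ← ha, map_sum]
        refine Finset.sum_congr rfl fun i _ => ?_
        rw [mul_comm, add_comm, G.cmul (G.amem hA (isHomogeneous_X k i)), Algebra.smul_def]
      rw [h3]
      exact Submodule.sum_mem _ fun i _ => M.smul_mem _ (ih m (by omega) (G.cmem _ _))
  have htop : M = ⊤ := by
    rw [eq_top_iff]
    intro x _
    exact G.ext (M := M.restrictScalars k) fun m => hM m (G.cmem m x)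
  refine ⟨htop ▸ ?_⟩
  refine Submodule.fg_biSup _ _ fun m _ => ?_
  have := G.fin m
  obtain ⟨s, hs⟩ := (Module.Finite.iff_fg.mp this)
  refine ⟨s, ?_⟩
  rw [← hs]
  exact (Submodule.span_span_of_tower k _ (s : Set R)).symm
end
end Grd

namespace Grd
section
variable (A R : Type*) [CommRing A] [IsDomain A] [CommRing R] [IsDomain R] [Algebra A R]
  [FaithfulSMul A R] [Module.Finite A R]
  (F K : Type*) [Field F] [Field K] [Algebra A F] [Algebra R K]
  [IsFractionRing A F] [IsFractionRing R K]
  [Algebra F K] [Algebra A K] [IsScalarTower A F K] [IsScalarTower A R K]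
include A R

lemma span_top : Submodule.span F (Set.range (algebraMap R K)) = ⊤ := by
  rw [eq_top_iff]
  intro z _
  obtain ⟨x, s, hs, rfl⟩ := IsFractionRing.div_surjective (A := R) z
  obtain ⟨a, ha, b, hb⟩ := (IsAlgebraic.exists_nonzero_dvd (R := A)
    (Algebra.IsIntegral.isIntegral (R := A) s).isAlgebraic hs)
  have hs0 : algebraMap R K s ≠ 0 := IsFractionRing.to_map_ne_zero_of_mem_nonZeroDivisors hs
  have ha0 : algebraMap A F a ≠ 0 := by
    rwa [Ne, IsFractionRing.to_map_eq_zero_iff]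
  have : algebraMap R K x / algebraMap R K s =
      (algebraMap A F a)⁻¹ • algebraMap R K (x * b) := by
    rw [eq_comm, inv_smul_eq_iff₀ ha0, Algebra.smul_def, ← IsScalarTower.algebraMap_apply A F K,
      IsScalarTower.algebraMap_apply A R K, hb, map_mul, map_mul]
    field_simp
  rw [this]
  exact Submodule.smul_mem _ _ (Submodule.subset_span ⟨_, rfl⟩)

lemma finite_frac : Module.Finite F K := by
  obtain ⟨s, hs⟩ := (Module.Finite.fg_top : (⊤ : Submodule A R).FG)
  classical
  refine ⟨⟨s.image (algebraMap R K), ?_⟩⟩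
  rw [eq_top_iff, ← span_top A R F K, Submodule.span_le]
  rintro _ ⟨x, rfl⟩
  have hx : x ∈ Submodule.span A (s : Set R) := hs ▸ Submodule.mem_top
  induction hx using Submodule.span_induction with
  | mem x hx => exact Submodule.subset_span (Finset.mem_coe.mpr (Finset.mem_image_of_mem _ hx))
  | zero => simp
  | add x y _ _ h1 h2 => rw [map_add]; exact Submodule.add_mem _ h1 h2
  | smul a x _ h =>
    rw [Algebra.smul_def, map_mul, ← IsScalarTower.algebraMap_apply,
      IsScalarTower.algebraMap_apply _ F K, ← Algebra.smul_def]
    exact Submodule.smul_mem _ _ h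

end
section
variable {k R : Type*} [Field k] [CommRing R] [IsDomain R] [Algebra k R]
  {g : ℕ → Submodule k R} {c : ℕ → R →ₗ[k] R} (G : Grd g c)
variable {r : ℕ} [Algebra (MvPolynomial (Fin r) k) R] 
  (hA : ∀ m a, c m (algebraMap (MvPolynomial (Fin r) k) R a) =
    algebraMap (MvPolynomial (Fin r) k) R (homogeneousComponent m a))
  [FaithfulSMul (MvPolynomial (Fin r) k) R]
  [Module.Finite (MvPolynomial (Fin r) k) R]
include G hA

open Polynomial in
lemma minpoly_coeff {m : ℕ} {x : R} (hx : x ∈ g m) (i : ℕ)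
    (hi : i ≤ (minpoly (MvPolynomial (Fin r) k) x).natDegree) :
    ((minpoly (MvPolynomial (Fin r) k) x).coeff i).IsHomogeneous
      (((minpoly (MvPolynomial (Fin r) k) x).natDegree - i) * m) := by
  set p := minpoly (MvPolynomial (Fin r) k) x with hp
  set s := p.natDegree with hs
  have hintg : IsIntegral (MvPolynomial (Fin r) k) x := Algebra.IsIntegral.isIntegral x
  let q : (MvPolynomial (Fin r) k)[X] := ∑ i ∈ Finset.range (s+1),
    Polynomial.monomial i (homogeneousComponent ((s - i) * m) (p.coeff i))
  have hqc : ∀ i, i ≤ s → q.coeff i = homogeneousComponent ((s - i) * m) (p.coeff i) := by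
    intro i hi
    simp only [q, Polynomial.finsetSum_coeff, Polynomial.coeff_monomial]
    rw [Finset.sum_ite_eq', if_pos (by simp; omega)]
  have hpm : p.Monic := minpoly.monic hintg
  have hqs : q.coeff s = 1 := by
    rw [hqc s le_rfl, show p.coeff s = 1 from hpm]
    simp
  have hqd : q.natDegree ≤ s := by
    apply Polynomial.natDegree_sum_le_of_forall_le
    intro i hi
    exact (Polynomial.natDegree_monomial_le _).trans (by simp at hi; omega)
  have hqm : q.Monic := Polynomial.monic_of_natDegree_le_of_coeff_eq_one s hqd hqs
  have hq0 : Polynomial.aeval x q = 0 := by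
    have h1 : Polynomial.aeval x p = 0 := minpoly.aeval _ _
    rw [Polynomial.aeval_eq_sum_range] at h1
    have h2 := congrArg (c (s * m)) h1
    rw [map_sum, map_zero] at h2
    rw [← h2]
    simp only [q, map_sum, Polynomial.aeval_monomial]
    refine Finset.sum_congr rfl fun i hi => ?_
    have hi' : i ≤ s := by simp at hi; omega
    obtain ⟨t, ht⟩ := Nat.exists_eq_add_of_le hi'
    rw [Algebra.smul_def, mul_comm, mul_comm (algebraMap _ _ _),
      show s * m = m * i + (s - i) * m by rw [ht]; simp; ring, G.cmul (G.pow hx i), hA]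
  have hdvd : p ∣ q := minpoly.isIntegrallyClosed_dvd hintg hq0
  have hpq : p = q := (Polynomial.eq_of_monic_of_dvd_of_natDegree_le hpm hqm hdvd hqd).symm
  conv => arg 1; rw [hpq]
  rw [hqc i hi]
  exact homogeneousComponent_isHomogeneous _ _
end
section
variable {k R : Type*} [Field k] [CommRing R] [IsDomain R] [Algebra k R]
  {g : ℕ → Submodule k R} {c : ℕ → R →ₗ[k] R} (G : Grd g c)
variable {r : ℕ} [Algebra (MvPolynomial (Fin r) k) R] 
  (hA : ∀ m a, c m (algebraMap (MvPolynomial (Fin r) k) R a) =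
    algebraMap (MvPolynomial (Fin r) k) R (homogeneousComponent m a))
  [FaithfulSMul (MvPolynomial (Fin r) k) R]
  [Module.Finite (MvPolynomial (Fin r) k) R]
  (F K : Type*) [Field F] [Field K] [Algebra (MvPolynomial (Fin r) k) F] [Algebra R K]
  [IsFractionRing (MvPolynomial (Fin r) k) F] [IsFractionRing R K]
  [Algebra F K] [Algebra (MvPolynomial (Fin r) k) K] [IsScalarTower (MvPolynomial (Fin r) k) F K]
  [IsScalarTower (MvPolynomial (Fin r) k) R K]

include G hA in
lemma trace_mem {m : ℕ} {x : R} (hx : x ∈ g m) :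
    ∃ a : MvPolynomial (Fin r) k, a.IsHomogeneous m ∧
      Algebra.trace F K (algebraMap R K x) = algebraMap _ F a := by
  have := finite_frac (MvPolynomial (Fin r) k) R F K
  have hintg : IsIntegral (MvPolynomial (Fin r) k) x := Algebra.IsIntegral.isIntegral x
  have hintg' : IsIntegral (MvPolynomial (Fin r) k) (algebraMap R K x) := hintg.algebraMap
  rw [trace_eq_finrank_mul_minpoly_nextCoeff,
    minpoly.isIntegrallyClosed_eq_field_fractions' F hintg',
    minpoly.algebraMap_eq (IsFractionRing.injective R K)]
  rw [Polynomial.nextCoeff_map (IsFractionRing.injective _ F)]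
  have h0 := minpoly.natDegree_pos hintg
  have := minpoly_coeff G hA hx ((minpoly (MvPolynomial (Fin r) k) x).natDegree - 1) (by omega)
  rw [show (minpoly (MvPolynomial (Fin r) k) x).natDegree -
    ((minpoly (MvPolynomial (Fin r) k) x).natDegree - 1) = 1 by omega, one_mul,
    ← Polynomial.nextCoeff_of_natDegree_pos h0] at this
  generalize Module.finrank (IntermediateField.adjoin F {algebraMap R K x}) K = N
  refine ⟨C (-(N : k)) * (minpoly (MvPolynomial (Fin r) k) x).nextCoeff, ?_, ?_⟩
  · have h5 := (isHomogeneous_C (Fin r) (-(N:k))).mul this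
    rwa [zero_add] at h5
  · simp
end
end Grd

namespace Grd
section
variable {k R : Type*} [Field k] [CommRing R] [IsDomain R] [Algebra k R]
  {g : ℕ → Submodule k R} {c : ℕ → R →ₗ[k] R} (G : Grd g c)
variable {r : ℕ} [Algebra (MvPolynomial (Fin r) k) R]
  [IsScalarTower k (MvPolynomial (Fin r) k) R]
  (hA : ∀ m a, c m (algebraMap (MvPolynomial (Fin r) k) R a) =
    algebraMap (MvPolynomial (Fin r) k) R (homogeneousComponent m a))
  [FaithfulSMul (MvPolynomial (Fin r) k) R]
  [Module.Finite (MvPolynomial (Fin r) k) R]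
  (F K : Type*) [Field F] [Field K] [Algebra (MvPolynomial (Fin r) k) F] [Algebra R K]
  [IsFractionRing (MvPolynomial (Fin r) k) F] [IsFractionRing R K]
  [Algebra F K] [Algebra (MvPolynomial (Fin r) k) K] [IsScalarTower (MvPolynomial (Fin r) k) F K]
  [IsScalarTower (MvPolynomial (Fin r) k) R K]
  [Algebra k F] [Algebra k K] [IsScalarTower k (MvPolynomial (Fin r) k) F]
  [IsScalarTower k R K] [IsScalarTower k F K]

include R in
lemma separable (hder : ∀ D : Derivation k R K,
    (∀ i, D (algebraMap (MvPolynomial (Fin r) k) R (X i)) = 0) → D = 0) :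
    Algebra.IsSeparable F K := by
  have := finite_frac (MvPolynomial (Fin r) k) R F K
  have hD : ∀ D : Derivation F K K, D = 0 := by
    intro D
    have h1 := hder ((D.restrictScalars k).compAlgebraMap R) (by
      intro i
      change D (algebraMap R K (algebraMap _ R (X i))) = 0
      rw [← IsScalarTower.algebraMap_apply, IsScalarTower.algebraMap_apply _ F K]
      exact D.map_algebraMap _)
    have h2 : ∀ x : R, D (algebraMap R K x) = 0 := fun x => congrArg (fun D => D x) h1
    ext z
    have hz : z ∈ Submodule.span F (Set.range (algebraMap R K)) := by
      rw [span_top (MvPolynomial (Fin r) k)]; trivial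
    have : Submodule.span F (Set.range (algebraMap R K)) ≤ LinearMap.ker D.toLinearMap := by
      rw [Submodule.span_le]
      rintro _ ⟨x, rfl⟩
      exact h2 x
    exact this hz
  have : Algebra.FormallyUnramified F K := by
    refine ⟨⟨fun v w => ?_⟩⟩
    rw [← sub_eq_zero, ← Module.forall_dual_apply_eq_zero_iff K]
    intro φ
    have : φ = 0 := (KaehlerDifferential.linearMapEquivDerivation F K).injective (by
      rw [hD (KaehlerDifferential.linearMapEquivDerivation F K φ), map_zero])
    rw [this]; rfl
  exact Algebra.FormallyUnramified.isSeparable F K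

include G hA in
lemma span_gr (hr : 0 < r) :
    Submodule.span F (algebraMap R K '' (g (Module.finrank F K - 1))) = ⊤ := by
  have := finite_frac (MvPolynomial (Fin r) k) R F K
  let V : ℕ → Submodule F K := fun i => Submodule.span F (algebraMap R K '' (g i))
  let y0 : MvPolynomial (Fin r) k := X ⟨0, hr⟩
  have hy0 : algebraMap (MvPolynomial (Fin r) k) F y0 ≠ 0 := by
    rw [Ne, IsFractionRing.to_map_eq_zero_iff]; exact X_ne_zero _
  have hV1 : ∀ i, V i ≤ V (i+1) := by
    intro i
    refine Submodule.span_le.mpr ?_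
    rintro _ ⟨x, hx, rfl⟩
    have : algebraMap R K x = (algebraMap (MvPolynomial (Fin r) k) F y0)⁻¹ •
        algebraMap R K (x * algebraMap _ R y0) := by
      rw [eq_inv_smul_iff₀ hy0, Algebra.smul_def, ← IsScalarTower.algebraMap_apply _ F K,
        map_mul, ← IsScalarTower.algebraMap_apply _ R K, mul_comm]
    rw [this]
    exact Submodule.smul_mem _ _ (Submodule.subset_span
      ⟨_, G.mul hx (G.amem hA (isHomogeneous_X k _)), rfl⟩)
  have hV2 : ∀ i, V i = V (i+1) → V (i+1) = V (i+2) := by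
    intro i hi
    refine le_antisymm (hV1 _) (Submodule.span_le.mpr ?_)
    have key : ∀ x ∈ g 1, ∀ z ∈ V i, algebraMap R K x * z ∈ V (i+1) := by
      intro x hx z hz
      have : V i ≤ (V (i+1)).comap (LinearMap.mulLeft F (algebraMap R K x)) := by
        refine Submodule.span_le.mpr ?_
        rintro _ ⟨w, hw, rfl⟩
        refine Submodule.subset_span ⟨x * w, ?_, by simp⟩
        rw [add_comm]; exact G.mul hx hw
      exact this hz
    rintro _ ⟨x, hx, rfl⟩
    let W : Submodule k R := ((V (i+1)).restrictScalars k).comap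
      (IsScalarTower.toAlgHom k R K).toLinearMap
    have : g (i+1+1) ≤ W := by
      apply G.succ
      intro x hx y hy
      change algebraMap R K (x * y) ∈ V (i+1)
      rw [map_mul]
      exact key x hx _ (by rw [hi]; exact Submodule.subset_span ⟨y, hy, rfl⟩)
    exact this hx
  have hVtop : ∀ i, V i = V (i+1) → V i = ⊤ := by
    intro i hi
    have h1 : ∀ j, V (i + j) = V i ∧ V (i + j + 1) = V i := by
      intro j
      induction j with
      | zero => exact ⟨rfl, hi.symm⟩
      | succ j ih =>
        refine ⟨ih.2, ?_⟩
        have := hV2 (i+j) (ih.1.trans ih.2.symm)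
        rw [← add_assoc, ← ih.2]; exact this.symm
    have h2 : ∀ j, V j ≤ V i := by
      intro j
      have : Monotone V := monotone_nat_of_le_succ hV1
      calc V j ≤ V (i + j) := this (by omega)
        _ = V i := (h1 j).1
    rw [eq_top_iff, ← span_top (MvPolynomial (Fin r) k) R F K, Submodule.span_le]
    rintro _ ⟨x, rfl⟩
    let W : Submodule k R := ((V i).restrictScalars k).comap
      (IsScalarTower.toAlgHom k R K).toLinearMap
    exact G.ext (M := W) fun m => h2 m (Submodule.subset_span ⟨_, G.cmem m x, rfl⟩)
  have hmain : ∀ i, V i = ⊤ ∨ i + 1 ≤ Module.finrank F (V i) := by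
    intro i
    induction i with
    | zero =>
      right
      have : V 0 ≠ ⊥ := by
        rw [Submodule.ne_bot_iff]
        exact ⟨1, Submodule.subset_span ⟨1, G.one, map_one _⟩, one_ne_zero⟩
      have := Submodule.one_le_finrank_iff.mpr this
      omega
    | succ i ih =>
      rcases ih with h | h
      · left; exact eq_top_iff.mpr (h ▸ hV1 i)
      · by_cases he : V i = V (i+1)
        · left; rw [← he]; exact hVtop i he
        · right
          have := Submodule.finrank_lt_finrank_of_lt (lt_of_le_of_ne (hV1 i) he)
          omega
  have hpos : 0 < Module.finrank F K := Module.finrank_pos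
  rcases hmain (Module.finrank F K - 1) with h | h
  · exact h
  · apply Submodule.eq_top_of_finrank_eq
    apply le_antisymm (Submodule.finrank_le _)
    change _ ≤ Module.finrank F (V _)
    omega
end
end Grd

lemma hs_finrank (k : Type*) [Field k] (r t : ℕ) :
    Module.finrank k (homogeneousSubmodule (Fin (r+1)) k t) = (t + r).choose r := by
  classical
  rw [homogeneousSubmodule_eq_finsupp_supported]
  rw [LinearEquiv.finrank_eq (AddMonoidAlgebra.supportedEquivFinsupp _)]
  have : {d : Fin (r+1) →₀ ℕ | d.degree = t} = (Finset.univ : Finset (Fin (r+1))).finsuppAntidiag t := by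
    ext d
    simp [Finsupp.degree_eq_sum]
  rw [this]
  rw [Module.finrank_finsupp_self]
  simp only [Finset.coe_sort_coe, Fintype.card_coe]
  rw [Finset.card_finsuppAntidiag_nat_eq_choose]
  simp only [Finset.card_univ, Fintype.card_fin]
  rw [show r + 1 + t - 1 = t + r by omega]
  exact Nat.choose_symm_add

namespace Grd
section
variable {k R : Type*} [Field k] [CommRing R] [IsDomain R] [Algebra k R]
  {g : ℕ → Submodule k R} {c : ℕ → R →ₗ[k] R} (G : Grd g c)
variable {r : ℕ} [Algebra (MvPolynomial (Fin r) k) R]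
  [IsScalarTower k (MvPolynomial (Fin r) k) R]
  (hA : ∀ m a, c m (algebraMap (MvPolynomial (Fin r) k) R a) =
    algebraMap (MvPolynomial (Fin r) k) R (homogeneousComponent m a))
  [FaithfulSMul (MvPolynomial (Fin r) k) R]
  [Module.Finite (MvPolynomial (Fin r) k) R]
  (F K : Type*) [Field F] [Field K] [Algebra (MvPolynomial (Fin r) k) F] [Algebra R K]
  [IsFractionRing (MvPolynomial (Fin r) k) F] [IsFractionRing R K]
  [Algebra F K] [Algebra (MvPolynomial (Fin r) k) K] [IsScalarTower (MvPolynomial (Fin r) k) F K]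
  [IsScalarTower (MvPolynomial (Fin r) k) R K]
  [Algebra k F] [Algebra k K] [IsScalarTower k (MvPolynomial (Fin r) k) F]
  [IsScalarTower k R K] [IsScalarTower k F K]

include G hA in
lemma basis (hr : 0 < r) : ∃ b : Fin (Module.finrank F K) → R,
    (∀ i, b i ∈ g (Module.finrank F K - 1)) ∧
    LinearIndependent F (fun i => algebraMap R K (b i)) ∧
    Submodule.span F (Set.range fun i => algebraMap R K (b i)) = ⊤ := by
  have := finite_frac (MvPolynomial (Fin r) k) R F K
  have h := Submodule.exists_fun_fin_finrank_span_eq F (algebraMap R K '' (g (Module.finrank F K - 1)))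
  rw [G.span_gr hA F K hr, finrank_top] at h
  obtain ⟨f, h1, h2, h3⟩ := h
  choose b hb hb' using h1
  refine ⟨b, hb, ?_, ?_⟩
  · simpa only [hb'] using h3
  · simpa only [hb'] using h2

include G hA in
lemma lower (hr : 0 < r) (t : ℕ) :
    Module.finrank F K * Module.finrank k (homogeneousSubmodule (Fin r) k t) ≤
      Module.finrank k (g (t + (Module.finrank F K - 1))) := by
  obtain ⟨b, hb, hli, -⟩ := G.basis hA F K hr
  have := G.fin (t + (Module.finrank F K - 1))
  have := hs_finite (σ := Fin r) (k := k) t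
  have hdim : Module.finrank k (Fin (Module.finrank F K) → homogeneousSubmodule (Fin r) k t) =
      Module.finrank F K * Module.finrank k (homogeneousSubmodule (Fin r) k t) := by
    rw [Module.finrank_pi_fintype]; simp
  rw [← hdim]
  let φ : (Fin (Module.finrank F K) → homogeneousSubmodule (Fin r) k t) →ₗ[k]
      g (t + (Module.finrank F K - 1)) :=
    LinearMap.codRestrict _ (∑ i, (LinearMap.mulLeft k (b i)) ∘ₗ
      (IsScalarTower.toAlgHom k (MvPolynomial (Fin r) k) R).toLinearMap ∘ₗ
      (homogeneousSubmodule (Fin r) k t).subtype ∘ₗ LinearMap.proj i) (by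
      intro a
      rw [LinearMap.sum_apply]
      refine Submodule.sum_mem _ fun i _ => ?_
      rw [add_comm]
      exact G.mul (hb i) (G.amem hA (a i).2))
  apply LinearMap.finrank_le_finrank_of_injective (f := φ)
  rw [injective_iff_map_eq_zero]
  intro a ha
  have h1 : ∑ i, b i * algebraMap (MvPolynomial (Fin r) k) R (a i) = 0 := by
    have := congrArg Subtype.val ha
    simpa [φ, LinearMap.sum_apply] using this
  have h2 := congrArg (algebraMap R K) h1
  rw [map_sum, map_zero] at h2
  rw [Fintype.linearIndependent_iff] at hli
  have h3 := hli (fun i => algebraMap _ F (a i).1) (by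
    rw [← h2]
    refine Finset.sum_congr rfl fun i _ => ?_
    rw [Algebra.smul_def, ← IsScalarTower.algebraMap_apply _ F K, map_mul,
      ← IsScalarTower.algebraMap_apply _ R K, mul_comm])
  ext i : 2
  have := h3 i
  rw [IsFractionRing.to_map_eq_zero_iff] at this
  exact this

include G hA in
lemma upper (hr : 0 < r) (hder : ∀ D : Derivation k R K,
    (∀ i, D (algebraMap (MvPolynomial (Fin r) k) R (X i)) = 0) → D = 0) (m : ℕ) :
    Module.finrank k (g m) ≤ Module.finrank F K *
      Module.finrank k (homogeneousSubmodule (Fin r) k (m + (Module.finrank F K - 1))) := by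
  obtain ⟨b, hb, -, hsp⟩ := G.basis hA F K hr
  have := finite_frac (MvPolynomial (Fin r) k) R F K
  have := separable (R := R) F K hder
  have := G.fin m
  have := hs_finite (σ := Fin r) (k := k) (m + (Module.finrank F K - 1))
  have hdim : Module.finrank k (Fin (Module.finrank F K) →
      homogeneousSubmodule (Fin r) k (m + (Module.finrank F K - 1))) =
      Module.finrank F K *
        Module.finrank k (homogeneousSubmodule (Fin r) k (m + (Module.finrank F K - 1))) := by
    rw [Module.finrank_pi_fintype]; simp
  rw [← hdim]
  let φ : g m →ₗ[k] (Fin (Module.finrank F K) → F) := LinearMap.pi fun i =>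
    ((Algebra.trace F K).restrictScalars k) ∘ₗ
      (IsScalarTower.toAlgHom k R K).toLinearMap ∘ₗ (LinearMap.mulLeft k (b i)) ∘ₗ (g m).subtype
  let ψ : (Fin (Module.finrank F K) →
      homogeneousSubmodule (Fin r) k (m + (Module.finrank F K - 1))) →ₗ[k]
      (Fin (Module.finrank F K) → F) := LinearMap.pi fun i =>
    (IsScalarTower.toAlgHom k (MvPolynomial (Fin r) k) F).toLinearMap ∘ₗ
      (Submodule.subtype _) ∘ₗ LinearMap.proj i
  have hφ : Function.Injective φ := by
    rw [injective_iff_map_eq_zero]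
    intro x hx
    have h1 : ∀ i, Algebra.trace F K (algebraMap R K (b i * x)) = 0 := fun i => congrFun hx i
    have h2 : ∀ z, Algebra.traceForm F K (algebraMap R K x) z = 0 := by
      intro z
      have hz : z ∈ Submodule.span F (Set.range fun i => algebraMap R K (b i)) := by
        rw [hsp]; trivial
      have : Submodule.span F (Set.range fun i => algebraMap R K (b i)) ≤
          LinearMap.ker (Algebra.traceForm F K (algebraMap R K x)) := by
        rw [Submodule.span_le]
        rintro _ ⟨i, rfl⟩
        have := h1 i
        rw [mul_comm, map_mul] at this
        simpa [Algebra.traceForm_apply] using this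
      exact this hz
    have h3 := (traceForm_nondegenerate F K).1 _ h2
    rw [IsFractionRing.to_map_eq_zero_iff] at h3
    exact Subtype.ext h3
  have hle : LinearMap.range φ ≤ LinearMap.range ψ := by
    rintro _ ⟨x, rfl⟩
    have h1 : ∀ i, ∃ a : MvPolynomial (Fin r) k, a.IsHomogeneous (m + (Module.finrank F K - 1)) ∧
      Algebra.trace F K (algebraMap R K (b i * x)) = algebraMap _ F a := by
      intro i
      refine G.trace_mem hA F K ?_
      rw [add_comm]
      exact G.mul (hb i) x.2
    choose a ha ha' using h1
    refine ⟨fun i => ⟨a i, ha i⟩, ?_⟩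
    ext i
    exact (ha' i).symm
  calc Module.finrank k (g m) = Module.finrank k (LinearMap.range φ) :=
        (LinearMap.finrank_range_of_inj hφ).symm
    _ ≤ Module.finrank k (LinearMap.range ψ) := Submodule.finrank_mono hle
    _ ≤ _ := LinearMap.finrank_range_le ψ
end
end Grd

lemma dim_le_of_integral (A R : Type*) [CommRing A] [CommRing R] [Algebra A R]
    [Algebra.IsIntegral A R] : ringKrullDim R ≤ ringKrullDim A := by
  refine Order.krullDim_le_of_strictMono (PrimeSpectrum.comap (algebraMap A R)) ?_
  intro p q hpq
  exact Ideal.IsIntegral.comap_lt_comap (I := p.asIdeal) (J := q.asIdeal) hpq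

theorem Grd.bounds {k R : Type*} [Field k] [CommRing R] [IsDomain R] [Algebra k R]
    {g : ℕ → Submodule k R} {c : ℕ → R →ₗ[k] R} (G : Grd g c) {d r : ℕ} (y : Fin r → R)
    (hyc : ∀ m (a : MvPolynomial (Fin r) k), c m (aeval y a) = aeval y (homogeneousComponent m a))
    (hrad : ∀ x ∈ g 1, x ∈ (Ideal.span (Set.range y)).radical)
    (hder : ∀ D : Derivation k R (FractionRing R), (∀ i, D (y i) = 0) → D = 0)
    (hinj : Function.Injective (aeval y : MvPolynomial (Fin r) k →ₐ[k] R))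
    (hdim : ((d+1:ℕ) : WithBot ℕ∞) ≤ ringKrullDim R) :
    ∃ r D, d ≤ r ∧ 0 < D ∧ (∀ m, Module.finrank k (g m) ≤ D * (m + (D-1) + r).choose r) ∧
      ∀ t, D * (t + r).choose r ≤ Module.finrank k (g (t + (D-1))) := by
  let _ : Algebra (MvPolynomial (Fin r) k) R := (aeval y).toRingHom.toAlgebra
  have hal : ∀ a, algebraMap (MvPolynomial (Fin r) k) R a = aeval y a := fun _ => rfl
  have : IsScalarTower k (MvPolynomial (Fin r) k) R := IsScalarTower.of_algebraMap_eq fun x => by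
    rw [hal, MvPolynomial.algebraMap_eq, aeval_C]
  have : FaithfulSMul (MvPolynomial (Fin r) k) R := (faithfulSMul_iff_algebraMap_injective _ _).mpr hinj
  have hA : ∀ m a, c m (algebraMap (MvPolynomial (Fin r) k) R a) =
    algebraMap (MvPolynomial (Fin r) k) R (homogeneousComponent m a) := hyc
  have : Module.Finite (MvPolynomial (Fin r) k) R := G.finite hA (by
    simpa only [hal, aeval_X] using hrad)
  have hr : d + 1 ≤ r := by
    have h1 := hdim.trans (dim_le_of_integral (MvPolynomial (Fin r) k) R)
    rw [MvPolynomial.ringKrullDim_of_isNoetherianRing, ringKrullDim_eq_zero_of_field, zero_add] at h1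
    rw [Nat.card_eq_fintype_card, Fintype.card_fin] at h1
    exact_mod_cast h1
  let _ : Algebra (FractionRing (MvPolynomial (Fin r) k)) (FractionRing R) :=
    FractionRing.liftAlgebra _ _
  have hder' : ∀ D : Derivation k R (FractionRing R),
    (∀ i, D (algebraMap (MvPolynomial (Fin r) k) R (X i)) = 0) → D = 0 := by
    simpa only [hal, aeval_X] using hder
  have : IsScalarTower k (FractionRing (MvPolynomial (Fin r) k)) (FractionRing R) := inferInstance
  obtain ⟨r, rfl⟩ : ∃ r', r = r' + 1 := ⟨r - 1, by omega⟩
  have hfin := Grd.finite_frac (MvPolynomial (Fin (r+1)) k) R (FractionRing (MvPolynomial (Fin (r+1)) k)) (FractionRing R)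
  have hu := G.upper hA (FractionRing (MvPolynomial (Fin (r+1)) k)) (FractionRing R) (by omega) hder'
  have hl := G.lower hA (FractionRing (MvPolynomial (Fin (r+1)) k)) (FractionRing R) (by omega)
  have hpos : 0 < Module.finrank (FractionRing (MvPolynomial (Fin (r+1)) k)) (FractionRing R) :=
    Module.finrank_pos
  simp only [hs_finrank] at hu hl
  exact ⟨r, _, by omega, hpos, hu, hl⟩

lemma gr_grd {k : Type*} [Field k] {σ : Type*} [Fintype σ] {P : Ideal (MvPolynomial σ k)}
    (hP : HomI P) : Grd (gr P) (grC hP) where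
  one := gr_one P
  mul := gr_mul P
  cmem := grC_mem hP
  ceq := grC_gr hP
  cmul := grC_mul hP
  ext := mem_of_grC hP
  succ := fun m _ h => gr_succ m h
  fin := gr_finite P

theorem prime_bounds {k : Type*} [Field k] [Infinite k] [PerfectField k] {σ : Type*} [Fintype σ]
    {P : Ideal (MvPolynomial σ k)} [P.IsPrime] (hP : HomI P) {d : ℕ}
    (hdim : ((d+1:ℕ) : WithBot ℕ∞) ≤ ringKrullDim (MvPolynomial σ k ⧸ P)) :
    ∃ r D, d ≤ r ∧ 0 < D ∧ (∀ m, Module.finrank k (gr P m) ≤ D * (m + (D-1) + r).choose r) ∧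
      ∀ t, D * (t + r).choose r ≤ Module.finrank k (gr P (t + (D-1))) := by
  obtain ⟨r, y, hy, hinj⟩ := normSys_exists hP
  exact (gr_grd hP).bounds y (grC_aeval hP hy.lin) hy.rad hy.der hinj hdim

section bc
variable {k k' : Type*} [Field k] [Field k'] [Algebra k k'] {σ : Type*}

/-- Coefficientwise application of a linear functional. -/
noncomputable def cfun (l : k' →ₗ[k] k) (F : MvPolynomial σ k') : MvPolynomial σ k :=
  ∑ d ∈ F.support, monomial d (l (coeff d F))

lemma coeff_cfun (l : k' →ₗ[k] k) (F : MvPolynomial σ k') (d : σ →₀ ℕ) :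
    coeff d (cfun l F) = l (coeff d F) := by
  classical
  simp only [cfun, coeff_sum, coeff_monomial]
  rw [Finset.sum_ite_eq']
  split_ifs with h
  · rfl
  · rw [notMem_support_iff.mp h, map_zero]

lemma cfun_mul_mem (l : k' →ₗ[k] k) (I : Ideal (MvPolynomial σ k)) {F : MvPolynomial σ k'}
    (hF : F ∈ I.map (map (algebraMap k k'))) : cfun l F ∈ I := by
  classical
  have hmul : ∀ (F : MvPolynomial σ k') (f : MvPolynomial σ k),
      cfun l (F * map (algebraMap k k') f) = cfun l F * f := by
    intro F f
    ext d
    rw [coeff_cfun, coeff_mul, coeff_mul, map_sum]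
    refine Finset.sum_congr rfl fun p _ => ?_
    rw [coeff_map, coeff_cfun, mul_comm, ← Algebra.smul_def, map_smul, smul_eq_mul, mul_comm]
  refine Submodule.span_induction (p := fun F _ => cfun l F ∈ I) ?_ ?_ ?_ ?_ hF
  · rintro _ ⟨f, hf, rfl⟩
    have := hmul 1 f
    rw [one_mul] at this
    rw [this]
    exact I.mul_mem_left _ hf
  · have : cfun l (0 : MvPolynomial σ k') = 0 := by ext d; simp [coeff_cfun]
    rw [this]; exact I.zero_mem
  · intro x y _ _ hx hy
    have : cfun l (x + y) = cfun l x + cfun l y := by ext d; simp [coeff_cfun]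
    rw [this]; exact I.add_mem hx hy
  · intro a x hx _
    -- use the span again, multiplying by `a`
    refine Submodule.span_induction (p := fun F _ => ∀ a, cfun l (a • F) ∈ I) ?_ ?_ ?_ ?_ hx a
    · rintro _ ⟨f, hf, rfl⟩ a
      rw [smul_eq_mul]
      change cfun l (a * map (algebraMap k k') f) ∈ I
      rw [hmul]; exact I.mul_mem_left _ hf
    · intro a
      have : cfun l (0 : MvPolynomial σ k') = 0 := by ext d; simp [coeff_cfun]
      rw [smul_zero, this]; exact I.zero_mem
    · intro x y _ _ hx hy a
      have : cfun l (a • x + a • y) = cfun l (a • x) + cfun l (a • y) := by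
        ext d; simp [coeff_cfun]
      rw [smul_add, this]; exact I.add_mem (hx a) (hy a)
    · intro b x _ hx a
      rw [smul_smul]; exact hx _

lemma bc_finrank [Fintype σ] (I : Ideal (MvPolynomial σ k)) (m : ℕ) :
    Module.finrank k' (gr (I.map (map (algebraMap k k'))) m) = Module.finrank k (gr I m) := by
  classical
  have := gr_finite I m
  have := gr_finite (I.map (map (algebraMap k k'))) m
  let b := Module.finBasis k (gr I m)
  have hb : ∀ i, ∃ f : MvPolynomial σ k, f.IsHomogeneous m ∧ Ideal.Quotient.mk I f = b i :=
    fun i => mem_gr I |>.mp (b i).2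
  choose f hf hfb using hb
  have hsum : ∀ (c : Fin (Module.finrank k (gr I m)) → k),
      Ideal.Quotient.mk I (∑ i, C (c i) * f i) = ((∑ i, c i • b i : gr I m) : MvPolynomial σ k ⧸ I) := by
    intro c
    rw [map_sum]
    rw [AddSubmonoidClass.coe_finsetSum]
    refine Finset.sum_congr rfl fun i _ => ?_
    rw [map_mul, hfb]
    exact (Algebra.smul_def (c i) ((b i : gr I m) : MvPolynomial σ k ⧸ I)).symm
  let v : Fin (Module.finrank k (gr I m)) → gr (I.map (map (algebraMap k k'))) m := fun i =>
    ⟨Ideal.Quotient.mk _ (map (algebraMap k k') (f i)), mk_mem_gr _ ((hf i).map _)⟩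
  have hv : ∀ (c : Fin (Module.finrank k (gr I m)) → k'),
      ((∑ i, c i • v i : gr (I.map (map (algebraMap k k'))) m) : MvPolynomial σ k' ⧸ (I.map (map (algebraMap k k')))) =
      Ideal.Quotient.mk _ (∑ i, C (c i) * map (algebraMap k k') (f i)) := by
    intro c
    rw [map_sum, AddSubmonoidClass.coe_finsetSum]
    refine Finset.sum_congr rfl fun i _ => ?_
    rw [map_mul]
    exact (Algebra.smul_def (c i) ((v i).1 : MvPolynomial σ k' ⧸ (I.map (map (algebraMap k k')))))
  have hli : LinearIndependent k' v := by
    rw [Fintype.linearIndependent_iff]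
    intro c hc
    have h1 := hv c
    rw [hc] at h1
    have h2 : (∑ i, C (c i) * map (algebraMap k k') (f i)) ∈ I.map (map (algebraMap k k')) :=
      Ideal.Quotient.eq_zero_iff_mem.mp h1.symm
    intro i
    rw [← Module.forall_dual_apply_eq_zero_iff k]
    intro l
    have h3 := cfun_mul_mem l I h2
    have h4 : cfun l (∑ i, C (c i) * map (algebraMap k k') (f i)) = ∑ i, C (l (c i)) * f i := by
      ext d
      rw [coeff_cfun, coeff_sum, coeff_sum, map_sum]
      refine Finset.sum_congr rfl fun i _ => ?_
      rw [coeff_C_mul, coeff_C_mul, coeff_map, mul_comm, ← Algebra.smul_def, map_smul, smul_eq_mul,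
        mul_comm]
    rw [h4, ← Ideal.Quotient.eq_zero_iff_mem, hsum (fun i => l (c i))] at h3
    have h5 : (∑ i, l (c i) • b i) = 0 := Subtype.ext h3
    exact (Fintype.linearIndependent_iff.mp b.linearIndependent) (fun i => l (c i)) h5 i
  have hle : ∀ w : MvPolynomial σ k', w.IsHomogeneous m →
      ∃ c : Fin (Module.finrank k (gr I m)) → k', Ideal.Quotient.mk (I.map (map (algebraMap k k'))) w =
        ((∑ i, c i • v i : gr (I.map (map (algebraMap k k'))) m) : MvPolynomial σ k' ⧸ (I.map (map (algebraMap k k')))) := by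
    intro w hw
    have hmono : ∀ d : σ →₀ ℕ, d.degree = m → ∃ c : Fin (Module.finrank k (gr I m)) → k,
        monomial d (1:k) - ∑ i, C (c i) * f i ∈ I := by
      intro d hd
      let x : gr I m := ⟨Ideal.Quotient.mk I (monomial d 1), mk_mem_gr _ (isHomogeneous_monomial 1 hd)⟩
      refine ⟨fun i => b.repr x i, ?_⟩
      rw [← Ideal.Quotient.eq, hsum, b.sum_repr]
    choose! c hc using hmono
    refine ⟨fun i => ∑ d ∈ w.support, coeff d w * algebraMap k k' (c d i), ?_⟩
    rw [hv, Ideal.Quotient.eq]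
    have h1 : ∑ i, C (∑ d ∈ w.support, coeff d w * algebraMap k k' (c d i)) * map (algebraMap k k') (f i)
        = ∑ d ∈ w.support, C (coeff d w) * map (algebraMap k k') (∑ i, C (c d i) * f i) := by
      simp only [map_sum, map_mul, map_C, Finset.sum_mul, Finset.mul_sum]
      rw [Finset.sum_comm]
      refine Finset.sum_congr rfl fun d _ => Finset.sum_congr rfl fun i _ => ?_
      ring
    have h2 : w = ∑ d ∈ w.support, C (coeff d w) * map (algebraMap k k') (monomial d 1) := by
      conv_lhs => rw [w.as_sum]
      refine Finset.sum_congr rfl fun d _ => ?_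
      rw [map_monomial, C_mul_monomial, map_one, mul_one]
    rw [h1]
    have h3 : w - ∑ d ∈ w.support, C (coeff d w) * map (algebraMap k k') (∑ i, C (c d i) * f i) =
        ∑ d ∈ w.support, (C (coeff d w) * map (algebraMap k k') (monomial d 1) -
          C (coeff d w) * map (algebraMap k k') (∑ i, C (c d i) * f i)) := by
      rw [Finset.sum_sub_distrib]
      exact congrArg₂ _ h2 rfl
    rw [h3]
    refine Ideal.sum_mem _ fun d hd => ?_
    rw [← mul_sub, ← map_sub]
    refine Ideal.mul_mem_left _ _ (Ideal.mem_map_of_mem _ (hc d ?_))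
    have := hw (mem_support_iff.mp hd)
    rwa [Finsupp.degree_eq_weight_one]
  have hsp : ⊤ ≤ Submodule.span k' (Set.range v) := by
    rintro ⟨x, w, hw, rfl⟩ _
    obtain ⟨c, hc⟩ := hle w hw
    have : (⟨Ideal.Quotient.mk (I.map (map (algebraMap k k'))) w, mk_mem_gr _ hw⟩ :
      gr (I.map (map (algebraMap k k'))) m) = ∑ i, c i • v i := Subtype.ext hc
    change (⟨Ideal.Quotient.mk (I.map (map (algebraMap k k'))) w, mk_mem_gr _ hw⟩ :
      gr (I.map (map (algebraMap k k'))) m) ∈ _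
    rw [this]
    exact Submodule.sum_mem _ fun i _ => Submodule.smul_mem _ _ (Submodule.subset_span ⟨i, rfl⟩)
  have := Module.finrank_eq_card_basis (Module.Basis.mk hli hsp)
  rw [this, Fintype.card_fin]

lemma HomI.map {I : Ideal (MvPolynomial σ k)} (hI : HomI I) :
    HomI (I.map (MvPolynomial.map (algebraMap k k'))) := by
  classical
  intro F hF m
  refine Submodule.span_induction (p := fun F _ => ∀ a m, homogeneousComponent m (a * F) ∈
    I.map (MvPolynomial.map (algebraMap k k'))) ?_ ?_ ?_ ?_ hF 1 m |> fun h => by simpa using h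
  · rintro _ ⟨f, hf, rfl⟩ a m
    have : a * MvPolynomial.map (algebraMap k k') f = ∑ i ∈ Finset.range (f.totalDegree + 1),
        MvPolynomial.map (algebraMap k k') (homogeneousComponent i f) * a := by
      conv_lhs => rw [← sum_homogeneousComponent f, map_sum, mul_comm, Finset.sum_mul]
    change homogeneousComponent m (a * MvPolynomial.map (algebraMap k k') f) ∈ _
    rw [this, map_sum]
    refine Ideal.sum_mem _ fun i _ => ?_
    have hh : (MvPolynomial.map (algebraMap k k') (homogeneousComponent i f)).IsHomogeneous i :=
      (homogeneousComponent_isHomogeneous i f).map _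
    rcases Nat.lt_or_ge m i with h | h
    · rw [hcomp_mul_lt hh h]; exact Ideal.zero_mem _
    · obtain ⟨j, rfl⟩ := Nat.exists_eq_add_of_le h
      rw [hcomp_mul hh]
      exact Ideal.mul_mem_right _ _ (Ideal.mem_map_of_mem _ (hI f hf i))
  · intro a m; simp
  · intro x y _ _ hx hy a m
    rw [mul_add, map_add]; exact Ideal.add_mem _ (hx a m) (hy a m)
  · intro b x _ hx a m
    rw [smul_eq_mul, ← mul_assoc]; exact hx _ _
end bc

section ext
variable (k : Type*) [Field k]

/-- The group algebra of the rationals. -/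
abbrev QB : Type _ := AddMonoidAlgebra k ℚ
/-- An infinite perfect extension of a perfect field. -/
abbrev QK : Type _ := FractionRing (AddMonoidAlgebra k ℚ)

lemma qk_infinite : Infinite (QK k) := by
  have h : Function.Injective (fun q : ℚ => algebraMap (QB k) (QK k) (AddMonoidAlgebra.single q 1)) :=
    (IsFractionRing.injective (QB k) (QK k)).comp
      (AddMonoidAlgebra.single_left_injective one_ne_zero)
  exact Infinite.of_injective _ h

lemma qk_perfect [PerfectField k] : PerfectField (QK k) := by
  obtain ⟨p, hp⟩ := ExpChar.exists k
  have : ExpChar (QK k) p := expChar_of_injective_algebraMap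
    (FaithfulSMul.algebraMap_injective k (QK k)) p
  have : ExpChar (QB k) p := expChar_of_injective_algebraMap
    (FaithfulSMul.algebraMap_injective k (QB k)) p
  have hp0 : p ≠ 0 := (expChar_pos k p).ne'
  have hsB : ∀ y : QB k, ∃ x, x ^ p = y := by
    intro y
    induction y using AddMonoidAlgebra.induction_linear with
    | zero => exact ⟨0, zero_pow hp0⟩
    | add f g hf hg =>
      obtain ⟨a, rfl⟩ := hf
      obtain ⟨b, rfl⟩ := hg
      exact ⟨a + b, add_pow_expChar a b p⟩
    | single q a =>
      obtain ⟨b, rfl⟩ := surjective_frobenius k p a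
      refine ⟨AddMonoidAlgebra.single (q / p) b, ?_⟩
      rw [AddMonoidAlgebra.single_pow, frobenius_def]
      congr 1
      rw [nsmul_eq_mul]
      field_simp
  have hs : Function.Surjective (frobenius (QK k) p) := by
    intro z
    obtain ⟨a, b, hb, rfl⟩ := IsFractionRing.div_surjective (A := QB k) z
    obtain ⟨x, rfl⟩ := hsB a
    obtain ⟨y, rfl⟩ := hsB b
    exact ⟨algebraMap _ _ x / algebraMap _ _ y, by rw [frobenius_def, div_pow, map_pow, map_pow]⟩
  have : PerfectRing (QK k) p := PerfectRing.ofSurjective (QK k) p hs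
  exact PerfectRing.toPerfectField (QK k) p

variable {k} {σ : Type*}

/-- The comparison map from polynomials over `QB k` to the group algebra over polynomials. -/
noncomputable def qTheta : MvPolynomial σ (QB k) →+* AddMonoidAlgebra (MvPolynomial σ k) ℚ :=
  eval₂Hom (AddMonoidAlgebra.mapRingHom ℚ (C : k →+* MvPolynomial σ k))
    (fun i => AddMonoidAlgebra.single 0 (X i))

/-- The reverse comparison map. -/
noncomputable def qXi : AddMonoidAlgebra (MvPolynomial σ k) ℚ →+* MvPolynomial σ (QK k) :=
  AddMonoidAlgebra.liftNCRingHom (MvPolynomial.map (algebraMap k (QK k)))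
    ((C : QK k →+* MvPolynomial σ (QK k)).toMonoidHom.comp
      ((algebraMap (QB k) (QK k)).toMonoidHom.comp (AddMonoidAlgebra.of k ℚ)))
    (fun _ _ => Commute.all _ _)

lemma qXi_qTheta (F : MvPolynomial σ (QB k)) :
    qXi (qTheta F) = MvPolynomial.map (algebraMap (QB k) (QK k)) F := by
  have : (qXi (σ := σ) (k := k)).comp qTheta = MvPolynomial.map (algebraMap (QB k) (QK k)) := by
    apply MvPolynomial.ringHom_ext
    · intro r
      have : ((qXi (σ := σ) (k := k)).comp qTheta).comp C =
        (MvPolynomial.map (algebraMap (QB k) (QK k))).comp C := by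
        apply AddMonoidAlgebra.ringHom_ext
        · intro r
          simp only [RingHom.comp_apply, qTheta, eval₂Hom_C, AddMonoidAlgebra.mapRingHom_single, qXi,
            AddMonoidAlgebra.liftNCRingHom_single, map_C, map_one, ofAdd_zero, mul_one]
          rw [IsScalarTower.algebraMap_apply k (QB k) (QK k)]; rfl
        · intro r
          simp [qXi, qTheta]
      exact congrArg (fun f => f r) this
    · intro i
      simp only [RingHom.comp_apply, qTheta, eval₂Hom_X', qXi,
            AddMonoidAlgebra.liftNCRingHom_single, map_X, map_one, ofAdd_zero, mul_one]
  exact congrArg (fun f => f F) this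

lemma qXi_mem (Q : Ideal (MvPolynomial σ k)) (G : AddMonoidAlgebra (MvPolynomial σ k) ℚ)
    (h : ∀ q, G.coeff q ∈ Q) : qXi G ∈ Q.map (MvPolynomial.map (algebraMap k (QK k))) := by
  rw [← AddMonoidAlgebra.sum_coeff_single G, Finsupp.sum, map_sum]
  refine Ideal.sum_mem _ fun q _ => ?_
  rw [qXi, AddMonoidAlgebra.liftNCRingHom_single]
  exact Ideal.mul_mem_right _ _ (Ideal.mem_map_of_mem _ (h q))

lemma q_prime_aux {A : Type*} [CommRing A] [IsDomain A] (π : MvPolynomial σ k →+* A)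
    (Q : Ideal (MvPolynomial σ k)) (hQ : ∀ f, π f = 0 ↔ f ∈ Q) :
    (Q.map (MvPolynomial.map (algebraMap k (QK k)))).IsPrime ∧
    (Q.map (MvPolynomial.map (algebraMap k (QK k)))).comap (MvPolynomial.map (algebraMap k (QK k))) = Q := by
  classical
  let j : QB k →+* (AddMonoidAlgebra A ℚ) := AddMonoidAlgebra.mapRingHom ℚ (π.comp C)
  have hj : Function.Injective j := by
    rw [injective_iff_map_eq_zero]
    intro x hx
    ext q
    have := congrArg (fun z : (AddMonoidAlgebra A ℚ) => z.coeff q) hx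
    simp only [j, AddMonoidAlgebra.coeff_mapRingHom] at this
    exact (map_eq_zero _).mp this
  let jj : QK k →+* (FractionRing (AddMonoidAlgebra A ℚ)) := IsFractionRing.map (A := QB k) (B := AddMonoidAlgebra A ℚ) (j := j) (K := QK k) (L := (FractionRing (AddMonoidAlgebra A ℚ))) hj
  let ι : AddMonoidAlgebra A ℚ →+* FractionRing (AddMonoidAlgebra A ℚ) := algebraMap (AddMonoidAlgebra A ℚ) (FractionRing (AddMonoidAlgebra A ℚ))
  let x : σ → FractionRing (AddMonoidAlgebra A ℚ) := fun i => ι (AddMonoidAlgebra.single 0 (π (X i)))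
  let φ : MvPolynomial σ (QK k) →+* (FractionRing (AddMonoidAlgebra A ℚ)) := eval₂Hom jj x
  have hjj : ∀ b : QB k, jj (algebraMap _ _ b) = ι (j b) := fun b =>
    IsLocalization.map_eq _ b
  -- compatibility on S
  have h1 : ∀ f : MvPolynomial σ k, φ (MvPolynomial.map (algebraMap k (QK k)) f) =
      ι (AddMonoidAlgebra.single 0 (π f)) := by
    intro f
    have : φ.comp (MvPolynomial.map (algebraMap k (QK k))) =
      (ι).comp (AddMonoidAlgebra.singleZeroRingHom.comp π) := by
      apply MvPolynomial.ringHom_ext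
      · intro r
        have h2 : algebraMap k (QK k) r = algebraMap (QB k) (QK k) (AddMonoidAlgebra.single 0 r) := by
          rw [IsScalarTower.algebraMap_apply k (QB k) (QK k)]; rfl
        simp only [RingHom.comp_apply, map_C, φ, eval₂Hom_C, h2, hjj, j,
          AddMonoidAlgebra.mapRingHom_single]
        rfl
      · intro i
        simp [φ, x]
    exact congrArg (fun f' => f' f) this
  -- compatibility on B[x]
  have h2 : ∀ F : MvPolynomial σ (QB k), φ (MvPolynomial.map (algebraMap (QB k) (QK k)) F) =
      ι (AddMonoidAlgebra.mapRingHom ℚ π (qTheta F)) := by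
    intro F
    have : φ.comp (MvPolynomial.map (algebraMap (QB k) (QK k))) =
      (ι).comp ((AddMonoidAlgebra.mapRingHom ℚ π).comp qTheta) := by
      apply MvPolynomial.ringHom_ext
      · intro r
        simp only [RingHom.comp_apply, map_C, φ, eval₂Hom_C, hjj, qTheta]
        congr 1
        ext q
        simp only [j, AddMonoidAlgebra.coeff_mapRingHom]
        rfl
      · intro i
        simp [φ, x, qTheta]
    exact congrArg (fun f' => f' F) this
  have hinj : Function.Injective (ι) := IsFractionRing.injective (AddMonoidAlgebra A ℚ) (FractionRing (AddMonoidAlgebra A ℚ))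
  have hker : Q.map (MvPolynomial.map (algebraMap k (QK k))) = RingHom.ker φ := by
    apply le_antisymm
    · rw [Ideal.map_le_iff_le_comap]
      intro f hf
      rw [Ideal.mem_comap, RingHom.mem_ker, h1, (hQ f).mpr hf,
        AddMonoidAlgebra.single_zero, map_zero]
    · intro F hF
      let _ : Algebra (MvPolynomial σ (QB k)) (MvPolynomial σ (QK k)) := MvPolynomial.algebraMvPolynomial
      obtain ⟨⟨F0, s⟩, hs⟩ := IsLocalization.surj
        ((nonZeroDivisors (QB k)).map (C (σ := σ))) F
      obtain ⟨s, t, ht, rfl⟩ := s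
      simp only [algebraMap_def] at hs
      have h3 : φ (MvPolynomial.map (algebraMap (QB k) (QK k)) F0) = 0 := by
        rw [← hs, map_mul, RingHom.mem_ker.mp hF, zero_mul]
      rw [h2, map_eq_zero_iff _ hinj] at h3
      have h4 := qXi_mem Q (qTheta F0) fun q => by
        rw [← hQ, ← AddMonoidAlgebra.coeff_mapRingHom, h3]
        rfl
      rw [qXi_qTheta, ← hs] at h4
      have ht0 : algebraMap (QB k) (QK k) t ≠ 0 := by
        simpa using nonZeroDivisors.ne_zero ht
      have h5 := Ideal.mul_mem_right (C (algebraMap (QB k) (QK k) t)⁻¹) _ h4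
      have h6 : MvPolynomial.map (algebraMap (QB k) (QK k)) (C t : MvPolynomial σ (QB k)) *
          C (algebraMap (QB k) (QK k) t)⁻¹ = 1 := by
        rw [map_C, ← C_mul, mul_inv_cancel₀ ht0, C_1]
      rw [mul_assoc] at h5
      erw [h6] at h5
      rwa [mul_one] at h5
  refine ⟨hker ▸ RingHom.ker_isPrime φ, ?_⟩
  ext f
  rw [hker, Ideal.mem_comap, RingHom.mem_ker, h1, map_eq_zero_iff _ hinj,
    AddMonoidAlgebra.single_eq_zero, hQ]

lemma q_prime (Q : Ideal (MvPolynomial σ k)) [Q.IsPrime] :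
    (Q.map (MvPolynomial.map (algebraMap k (QK k)))).IsPrime ∧
    (Q.map (MvPolynomial.map (algebraMap k (QK k)))).comap (MvPolynomial.map (algebraMap k (QK k))) = Q :=
  q_prime_aux (Ideal.Quotient.mk Q) Q fun _ => Ideal.Quotient.eq_zero_iff_mem

lemma q_dim (P : Ideal (MvPolynomial σ k)) :
    ringKrullDim (MvPolynomial σ k ⧸ P) ≤
      ringKrullDim (MvPolynomial σ (QK k) ⧸ P.map (MvPolynomial.map (algebraMap k (QK k)))) := by
  rw [ringKrullDim_quotient, ringKrullDim_quotient]
  refine Order.krullDim_le_of_strictMono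
    (fun Q => ⟨⟨Q.1.asIdeal.map (MvPolynomial.map (algebraMap k (QK k))), (q_prime Q.1.asIdeal).1⟩, ?_⟩) ?_
  · exact Ideal.map_mono Q.2
  · apply Monotone.strictMono_of_injective
    · intro Q Q' h
      exact Ideal.map_mono (show Q.1.asIdeal ≤ Q'.1.asIdeal from h)
    · intro Q Q' h
      have h1 := congrArg (fun z => z.1.asIdeal) h
      simp only at h1
      have := congrArg (Ideal.comap (MvPolynomial.map (algebraMap k (QK k)))) h1
      rw [(q_prime Q.1.asIdeal).2, (q_prime Q'.1.asIdeal).2] at this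
      exact Subtype.ext (PrimeSpectrum.ext this)

theorem prime_bounds' [PerfectField k] [Fintype σ] {P : Ideal (MvPolynomial σ k)} [P.IsPrime]
    (hP : HomI P) {d : ℕ}
    (hdim : ((d+1:ℕ) : WithBot ℕ∞) ≤ ringKrullDim (MvPolynomial σ k ⧸ P)) :
    ∃ r D, d ≤ r ∧ 0 < D ∧ (∀ m, Module.finrank k (gr P m) ≤ D * (m + (D-1) + r).choose r) ∧
      ∀ t, D * (t + r).choose r ≤ Module.finrank k (gr P (t + (D-1))) := by
  have := qk_infinite k
  have := qk_perfect k
  have := (q_prime P).1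
  have := prime_bounds (k := QK k) (hP.map (k' := QK k)) (hdim.trans (q_dim P))
  simpa only [bc_finrank] using this
end ext

section fin
variable {k : Type*} [Field k] {n : ℕ}

lemma green_app (I : Ideal (MvPolynomial (Fin (n+1)) k)) (t : ℕ) (y : ℝ) (hy : 1 ≤ y)
    (h : lov (t+1) (y-1) ≤ (hilbF k I (t+1) : ℝ) - hilbF k I t) :
    lov (t+1) y ≤ hilbF k I (t+1) := by
  have := qk_infinite k
  have hbc : ∀ m, hilbF k I m = hilbF (QK k) (I.map (MvPolynomial.map (algebraMap k (QK k)))) m :=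
    fun m => (bc_finrank (k' := QK k) I m).symm
  rw [hbc, hbc] at h
  rw [hbc]
  generalize I.map (MvPolynomial.map (algebraMap k (QK k))) = J at h ⊢
  rw [hilbF_eq_cdm] at h ⊢
  refine green t _ _ rfl y hy fun a => h.trans ?_
  rw [hilbF_eq_cdm]
  have h1 := cdm_sec t (J.restrictScalars (QK k)) a
  have h2 : cdm t ((J.restrictScalars (QK k)).comap (LinearMap.mulLeft (QK k) (linF a))) ≤
      cdm t (J.restrictScalars (QK k)) :=
    cdm_mono t (inf_le_right.trans fun x hx => J.mul_mem_left _ hx)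
  have h1' : (cdm (t+1) (J.restrictScalars (QK k)) : ℝ) = _ := congrArg (Nat.cast (R := ℝ)) h1
  have h2' := Nat.cast_le (α := ℝ).mpr h2
  push_cast at h1'
  linarith

lemma hilbF_inf_le (I J : Ideal (MvPolynomial (Fin (n+1)) k)) (m : ℕ) :
    hilbF k (I ⊓ J) m ≤ hilbF k I m + hilbF k J m := by
  rw [hilbF_eq_cdm, hilbF_eq_cdm, hilbF_eq_cdm]
  have := hs_finite (k := k) (σ := Fin (n+1)) m
  have h1 := cdm_inf m (I.restrictScalars k)
  have h2 := cdm_inf m (J.restrictScalars k)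
  have h3 := cdm_inf m ((I ⊓ J).restrictScalars k)
  set H := homogeneousSubmodule (Fin (n+1)) k m
  have fA : FiniteDimensional k (H ⊓ I.restrictScalars k : Submodule k _) :=
    Submodule.finiteDimensional_of_le inf_le_left
  have fB : FiniteDimensional k (H ⊓ J.restrictScalars k : Submodule k _) :=
    Submodule.finiteDimensional_of_le inf_le_left
  have h4 := Submodule.finrank_sup_add_finrank_inf_eq (H ⊓ I.restrictScalars k) (H ⊓ J.restrictScalars k)
  have h5 : (H ⊓ I.restrictScalars k) ⊓ (H ⊓ J.restrictScalars k) = H ⊓ (I ⊓ J).restrictScalars k := by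
    ext x; simp; tauto
  rw [h5] at h4
  have h6 : Module.finrank k ((H ⊓ I.restrictScalars k) ⊔ (H ⊓ J.restrictScalars k) : Submodule k _) ≤
      Module.finrank k H := Submodule.finrank_mono (sup_le inf_le_left inf_le_left)
  omega

lemma hilbF_inf_ge {J P : Ideal (MvPolynomial (Fin (n+1)) k)} (hJ : HomI J) (hP : HomI P)
    [P.IsPrime] (h : ¬ J ≤ P) : ∃ b, ∀ m, hilbF k P m + hilbF k J (m + b) ≤ hilbF k (P ⊓ J) (m + b) := by
  classical
  obtain ⟨g, hg, hgP⟩ := SetLike.not_le_iff_exists.mp h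
  obtain ⟨b, hb⟩ : ∃ b, homogeneousComponent b g ∉ P := by
    by_contra hc
    push Not at hc
    apply hgP
    rw [← sum_homogeneousComponent g]
    exact Ideal.sum_mem _ fun i _ => hc i
  refine ⟨b, fun m => ?_⟩
  have hPJ : IsHomogeneousIdeal (P ⊓ J) := fun f hf m => ⟨hP f hf.1 m, hJ f hf.2 m⟩
  rw [hilbF_add hPJ (homogeneousComponent_isHomogeneous b g) P ?_ m]
  · refine Nat.add_le_add_left (hilbF_mono ?_ _) _
    refine sup_le inf_le_right ?_
    rw [Ideal.span_singleton_le_iff_mem]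
    exact hJ g hg b
  · intro x
    constructor
    · intro hx
      exact ⟨P.mul_mem_left _ hx, J.mul_mem_right _ (hJ g hg b)⟩
    · intro hx
      exact (Ideal.IsPrime.mem_or_mem ‹P.IsPrime› hx.1).resolve_left hb

lemma HomI.finset_inf (s : Finset (Ideal (MvPolynomial (Fin (n+1)) k))) (h : ∀ P ∈ s, HomI P) :
    HomI (s.inf id) := by
  intro f hf m
  rw [Submodule.mem_finsetInf] at hf ⊢
  exact fun P hP => h P hP f (hf P hP) m

lemma hilbF_top (m : ℕ) : hilbF k (⊤ : Ideal (MvPolynomial (Fin (n+1)) k)) m = 0 := by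
  unfold hilbF
  have : Subsingleton (MvPolynomial (Fin (n+1)) k ⧸ (⊤ : Ideal (MvPolynomial (Fin (n+1)) k))) :=
    Ideal.Quotient.subsingleton_iff.mpr rfl
  exact Module.finrank_zero_of_subsingleton

lemma finset_bounds (L : Ideal (MvPolynomial (Fin (n+1)) k) → ℕ → ℕ) (hL : ∀ P, Monotone (L P))
    (s : Finset (Ideal (MvPolynomial (Fin (n+1)) k))) :
    (∀ P ∈ s, HomI P ∧ P.IsPrime ∧ ∃ c, ∀ t, L P t ≤ hilbF k P (t + c)) →
    (∀ P ∈ s, ∀ Q ∈ s, Q ≤ P → Q = P) →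
    (∀ m, hilbF k (s.inf id) m ≤ ∑ P ∈ s, hilbF k P m) ∧
    ∃ b, ∀ c, b ≤ c → ∀ t, ∑ P ∈ s, L P t ≤ hilbF k (s.inf id) (t + c) := by
  classical
  induction s using Finset.induction_on with
  | empty =>
    intro _ _
    refine ⟨fun m => ?_, 0, fun c _ t => by simp⟩
    rw [Finset.inf_empty, hilbF_top]; simp
  | insert P s hPs ih =>
    intro h1 h2
    obtain ⟨hu, b, hb⟩ := ih (fun Q hQ => h1 Q (Finset.mem_insert_of_mem hQ))
      (fun Q hQ Q' hQ' => h2 Q (Finset.mem_insert_of_mem hQ) Q' (Finset.mem_insert_of_mem hQ'))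
    obtain ⟨hP, hPp, cP, hc⟩ := h1 P (Finset.mem_insert_self _ _)
    rw [Finset.inf_insert, id]
    refine ⟨fun m => ?_, ?_⟩
    · rw [Finset.sum_insert hPs]
      exact (hilbF_inf_le _ _ _).trans (Nat.add_le_add_left (hu m) _)
    have hn : ¬ s.inf id ≤ P := by
      rw [Ideal.IsPrime.inf_le' hPp]
      rintro ⟨Q, hQ, hle⟩
      have := h2 P (Finset.mem_insert_self _ _) Q (Finset.mem_insert_of_mem hQ) hle
      exact hPs (this ▸ hQ)
    obtain ⟨b0, hb0⟩ := hilbF_inf_ge (HomI.finset_inf s fun Q hQ => (h1 Q (Finset.mem_insert_of_mem hQ)).1)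
      hP hn
    refine ⟨b + cP + b0, fun c hcc t => ?_⟩
    rw [Finset.sum_insert hPs]
    have e1 := hb0 (t + (c - b0))
    have e2 : t + (c - b0) + b0 = t + c := by omega
    rw [e2] at e1
    refine le_trans (Nat.add_le_add ?_ (hb c (by omega) t)) e1
    have e3 := hc (t + (c - b0 - cP))
    have e4 : t + (c - b0 - cP) + cP = t + (c - b0) := by omega
    rw [e4] at e3
    exact (hL P (Nat.le_add_right _ _)).trans e3

lemma minimal_hom {I P : Ideal (MvPolynomial (Fin (n+1)) k)} (hI : HomI I)
    (hP : P ∈ I.minimalPrimes) : HomI P := by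
  let _ := gradedAlgebra (σ := Fin (n+1)) (R := k)
  have hdec : ∀ (f : MvPolynomial (Fin (n+1)) k) (i : ℕ),
      ((DirectSum.decompose (homogeneousSubmodule (Fin (n+1)) k) f) i : MvPolynomial (Fin (n+1)) k) =
        homogeneousComponent i f := fun f i => decomposition.decompose'_apply f i
  have hp : P.IsPrime := hP.1.1
  have hle : I ≤ (P.homogeneousCore (homogeneousSubmodule (Fin (n+1)) k)).toIdeal := by
    have h1 : I.IsHomogeneous (homogeneousSubmodule (Fin (n+1)) k) := by
      intro i f hf
      exact (hdec f i).symm ▸ hI f hf i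
    rw [← h1.toIdeal_homogeneousCore_eq_self]
    exact Ideal.homogeneousCore_mono _ hP.1.2
  have h2 := hP.2 ⟨hp.homogeneousCore, hle⟩ (Ideal.toIdeal_homogeneousCore_le _ P)
  have h3 : P.IsHomogeneous (homogeneousSubmodule (Fin (n+1)) k) := by
    rw [Ideal.IsHomogeneous.iff_eq]
    exact le_antisymm (Ideal.toIdeal_homogeneousCore_le _ P) h2
  intro f hf m
  have := h3 m hf
  rwa [hdec] at this

lemma asym {q : Polynomial ℚ} {c : ℚ} {r : ℕ} (hr : 1 ≤ r) (hq : q.natDegree ≤ r)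
    (hc : q.coeff r < c) (h : ∀ᶠ t : ℕ in Filter.atTop, c * (t:ℚ) ^ r ≤ q.eval (t:ℚ)) : False := by
  set u := q - Polynomial.C c * Polynomial.X ^ r with hu
  have hcoeff : u.coeff r = q.coeff r - c := by simp [hu]
  have hneg : u.coeff r < 0 := by rw [hcoeff]; linarith
  have hdeg : u.natDegree = r := by
    apply le_antisymm
    · refine (Polynomial.natDegree_sub_le _ _).trans (max_le hq ?_)
      exact Polynomial.natDegree_C_mul_X_pow_le _ _
    · exact Polynomial.le_natDegree_of_ne_zero hneg.ne
  have hlim := (Polynomial.tendsto_atBot_of_leadingCoeff_nonpos u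
    (Polynomial.natDegree_pos_iff_degree_pos.mp (by omega))
    (by rw [Polynomial.leadingCoeff, hdeg]; exact hneg.le)).comp tendsto_natCast_atTop_atTop
  obtain ⟨t, ht1, ht2⟩ := (h.and (hlim.eventually (Filter.eventually_lt_atBot 0))).exists
  simp [hu] at ht2
  linarith

lemma choose_lower (t r : ℕ) : ((t:ℚ) ^ r) / (r.factorial : ℚ) ≤ ((t + r).choose r : ℕ) := by
  have h1 := Nat.pow_succ_le_ascFactorial (t+1) r
  have h2 := Nat.ascFactorial_eq_factorial_mul_choose t r
  rw [div_le_iff₀ (by positivity)]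
  have h3 : t ^ r ≤ (t + r).choose r * r.factorial := by
    rw [mul_comm, ← h2]
    exact (Nat.pow_le_pow_left (Nat.le_succ t) r).trans h1
  exact_mod_cast h3

lemma asym2 {p : Polynomial ℚ} {h : ℕ → ℕ} (hp : ∀ᶠ m : ℕ in Filter.atTop, (h m : ℚ) = p.eval (m:ℚ))
    {E r b : ℕ} (hr : 1 ≤ r) (hE : ∀ t, E * (t + r).choose r ≤ h (t + b)) :
    (0 < E → r ≤ p.natDegree) ∧ (r = p.natDegree → (E : ℚ) ≤ r.factorial * p.leadingCoeff) := by
  have key : ∀ᶠ t : ℕ in Filter.atTop, (E / r.factorial : ℚ) * (t:ℚ) ^ r ≤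
      (Polynomial.taylor (b:ℚ) p).eval (t:ℚ) := by
    have := (Filter.tendsto_add_atTop_nat b).eventually hp
    filter_upwards [this] with t ht
    rw [Polynomial.taylor_eval]
    have e1 := hE t
    have e2 : ((E * (t + r).choose r : ℕ) : ℚ) ≤ h (t + b) := by exact_mod_cast e1
    rw [ht] at e2
    push_cast at e2
    refine le_trans ?_ e2
    calc (E / r.factorial : ℚ) * (t:ℚ) ^ r = E * ((t:ℚ) ^ r / r.factorial) := by ring
      _ ≤ _ := mul_le_mul_of_nonneg_left (choose_lower t r) (by positivity)
  have hn := Polynomial.natDegree_taylor p (b:ℚ)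
  constructor
  · intro hE0
    by_contra hlt
    push Not at hlt
    refine asym hr (by omega) ?_ key
    rw [Polynomial.coeff_eq_zero_of_natDegree_lt (by omega)]
    positivity
  · intro hrr
    by_contra hlt
    push Not at hlt
    refine asym hr (by omega) ?_ key
    have : (Polynomial.taylor (b:ℚ) p).coeff r = p.leadingCoeff := by
      rw [← Polynomial.leadingCoeff_taylor (b:ℚ) (f := p), Polynomial.leadingCoeff, hn, hrr]
    rw [this, lt_div_iff₀ (by positivity)]
    linarith

theorem upper_bound [PerfectField k] {d : ℕ} (hd : 1 ≤ d)
    (I : Ideal (MvPolynomial (Fin (n+1)) k)) (hhom : IsHomogeneousIdeal I)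
    (hrad : I.IsRadical) (hunm : IsUnmixed k I d) (hne : hilbP k I ≠ 0)
    (hdim : idealDim k I = d) (s : ℕ) :
    hilbF k I s ≤ idealDeg k I * (s + idealDeg k I - 1 + d).choose d := by
  classical
  have hp : ∀ᶠ m : ℕ in Filter.atTop, (hilbF k I m : ℚ) = (hilbP k I).eval (m : ℚ) := by
    by_cases h : ∃ P : Polynomial ℚ, ∀ᶠ m : ℕ in Filter.atTop, (hilbF k I m : ℚ) = P.eval (m : ℚ)
    · unfold hilbP
      rw [dif_pos h]
      exact h.choose_spec
    · exact absurd (by unfold hilbP; rw [dif_neg h]) hne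
  have hfin := I.finite_minimalPrimes_of_isNoetherianRing
  have hdim' : (hilbP k I).natDegree = d := hdim
  have hprime : ∀ P ∈ I.minimalPrimes, ∃ D : ℕ, 0 < D ∧
      (∀ m, hilbF k P m ≤ D * (m + (D-1) + d).choose d) ∧
      ∀ t, D * (t + d).choose d ≤ hilbF k P (t + (D-1)) := by
    intro P hP
    have : P.IsPrime := hP.1.1
    have hass : P ∈ associatedPrimes (MvPolynomial (Fin (n+1)) k) (MvPolynomial (Fin (n+1)) k ⧸ I) := by
      apply Module.associatedPrimes.minimalPrimes_annihilator_subset_associatedPrimes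
      rwa [Ideal.annihilator_quotient]
    obtain ⟨r, D, hdr, hD, hU, hLo⟩ := prime_bounds' (minimal_hom hhom hP) (hunm P hass).ge
    have hrd : r ≤ d := by
      rw [← hdim']
      exact (asym2 hp (hdr.trans' hd) (E := D) (b := D - 1)
        (fun t => (hLo t).trans (hilbF_mono hP.1.2 _))).1 hD
    obtain rfl : r = d := le_antisymm hrd hdr
    exact ⟨D, hD, hU, hLo⟩
  choose! D hD hU hLo using hprime
  have hfs := finset_bounds (fun P t => D P * (t + d).choose d)
    (fun P a b hab => Nat.mul_le_mul_left _ (Nat.choose_le_choose _ (by omega))) hfin.toFinset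
    (fun P hP => by
      rw [Set.Finite.mem_toFinset] at hP
      exact ⟨minimal_hom hhom hP, hP.1.1, D P - 1, hLo P hP⟩)
    (fun P hP Q hQ hle => by
      rw [Set.Finite.mem_toFinset] at hP hQ
      exact le_antisymm hle (hP.2 hQ.1 hle))
  have hinf : hfin.toFinset.inf id = I := by
    rw [Finset.inf_id_eq_sInf, Set.Finite.coe_toFinset, Ideal.sInf_minimalPrimes, hrad.radical]
  rw [hinf] at hfs
  obtain ⟨h1, b, h2⟩ := hfs
  have hsum : ∑ P ∈ hfin.toFinset, D P ≤ idealDeg k I := by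
    have := (asym2 hp hd (E := ∑ P ∈ hfin.toFinset, D P) (b := b)
      (fun t => by rw [Finset.sum_mul]; exact h2 b le_rfl t)).2 hdim'.symm
    unfold idealDeg
    rw [hdim']
    exact Nat.le_floor this
  calc hilbF k I s ≤ ∑ P ∈ hfin.toFinset, hilbF k P s := h1 s
    _ ≤ ∑ P ∈ hfin.toFinset, D P * (s + idealDeg k I - 1 + d).choose d := by
        refine Finset.sum_le_sum fun P hP => ?_
        have hP' : P ∈ I.minimalPrimes := by rwa [Set.Finite.mem_toFinset] at hP
        refine (hU P hP' s).trans (Nat.mul_le_mul_left _ (Nat.choose_le_choose _ ?_))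
        have e1 : D P ≤ ∑ P ∈ hfin.toFinset, D P := Finset.single_le_sum (f := D) (fun _ _ => Nat.zero_le _) hP
        have e2 := hD P hP'
        omega
    _ = (∑ P ∈ hfin.toFinset, D P) * (s + idealDeg k I - 1 + d).choose d := by rw [Finset.sum_mul]
    _ ≤ _ := Nat.mul_le_mul_right _ hsum
end fin

/-- Hilbert function of a hypersurface section of a homogeneous
unmixed radical ideal of projective dimension `d ≥ 1`:
`h_{(I,f)}(m) ≤ 3 · deg f · deg I · C(m+d−1, d−1)` for `m ≥ 5·d·deg I`. -/
theorem hilbert_function_hypersurface_section {k : Type*} [Field k]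
    [PerfectField k] {n d e : ℕ} (hd : 1 ≤ d)
    (I : Ideal (MvPolynomial (Fin (n+1)) k)) (hhom : IsHomogeneousIdeal I)
    (hrad : I.IsRadical) (hunm : IsUnmixed k I d) (hne : hilbP k I ≠ 0)
    (hdim : idealDim k I = d)
    (f : MvPolynomial (Fin (n+1)) k) (hf : f.IsHomogeneous e) (hf0 : f ≠ 0)
    (hreg : ∀ g, f * g ∈ I → g ∈ I) :
    ∀ m : ℕ, 5 * d * idealDeg k I ≤ m →
      hilbF k (I ⊔ Ideal.span {f}) m ≤
        3 * e * idealDeg k I * Nat.choose (m + d - 1) (d - 1) := by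
  intro m hm
  refine numerics (hilbF k I) (idealDeg k I) d e m _ hd hm
    (upper_bound hd I hhom hrad hunm hne hdim) (green_app I) (hilbF_mono le_sup_left m) ?_
  intro hem
  obtain ⟨t, rfl⟩ := Nat.exists_eq_add_of_le' hem
  rw [hilbF_add hhom hf I (fun g => ⟨fun hg => I.mul_mem_left _ hg, hreg g⟩) t, Nat.add_sub_cancel]
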